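/- Let k be a field of characteristic not equal to 2 with a fixed algebraic closure, let f(z) = z² + c ∈ k[z] with f^r(0) = 0 for a minimal integer r ≥ 1, and let x_0 ∈ k. Define D_1 := x_0 − c and D_i := f^i(0) − x_0 for 2 ≤ i ≤ r. For n ≥ 1 let K_{x_0,n} be the splitting field of f^n(X) − x_0 over k inside the algebraic closure, K_{x_0,∞} = ⋃_n K_{x_0,n}, and G_{x_0,∞} = Gal(K_{x_0,∞}/k). Then the following are equivalent: (1) [k(ζ_8, √D_1, …, √D_r) : k] = 2^{r+2}, where ζ_8 is a primitive 8th root of unity; (2) [K_{x_0,2r+1} : k] = |M_{r,2r+1}|; (3) [K_{x_0,n} : k] = |M_{r,n}| for every n ≥ 1; (4) there exists a labeling ℓ of the tree of iterated preimages of x_0 — a map from finite words over {a,b} to the algebraic closure with ℓ(empty word) = x_0, f(ℓ(wa)) = f(ℓ(wb)) = ℓ(w), and ℓ(wa) = −ℓ(wb) — such that the map sending each σ ∈ G_{x_0,∞} to the tree automorphism τ determined by σ(ℓ(w)) = ℓ(τ(w)) for all words w is a group isomorphism from G_{x_0,∞} onto M_{r,∞}. -/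

import Mathlib

/-- Nodes of the infinite binary rooted tree `T_∞` are finite words over `{a,b}`,
encoded as `List Bool` with `a = false` and `b = true`; children of `w` are
`w ++ [false]` and `w ++ [true]`. An automorphism of `T_∞`. -/
def IsTreeAut (σ : List Bool → List Bool) : Prop :=
  Function.Bijective σ ∧ (∀ w, (σ w).length = w.length) ∧
    ∀ w s, ∃ t, σ (w ++ [s]) = σ w ++ [t]

/-- The parity `Par(σ,x) ∈ {0,1}`: `0` if `σ(xa) = σ(x)a`, and `1` otherwise. -/
def par (σ : List Bool → List Bool) (x : List Bool) : ℕ :=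
  if σ (x ++ [false]) = σ x ++ [false] then 0 else 1

/-- `W(r,i)`: the words `s₁ ⋯ s_{ri−1}` of length `r*i − 1` over `{a,b}` with
`s_j = a` whenever `r ∣ j`. -/
noncomputable def Wset (r i : ℕ) : Finset (List Bool) :=
  ((Finset.univ : Finset (Fin (r*i-1) → Bool)).filter
    (fun s => ∀ j : Fin (r*i-1), r ∣ (j:ℕ)+1 → s j = false)).image List.ofFn

/-- `Q_r(σ,x) := Σ_{i≥1} 2^i Σ_{w ∈ W(r,i)} Par(σ, xw)` in `ℤ₂`. -/
noncomputable def Qr (r : ℕ) (σ : List Bool → List Bool) (x : List Bool) : ℤ_[2] :=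
  ∑' i : ℕ, (2:ℤ_[2])^(i+1) * ∑ w ∈ Wset r (i+1), (par σ (x ++ w) : ℤ_[2])

/-- `P_r(σ,x) := (−1)^{Par(σ,x)} + Q_r(σ,xb) − Q_r(σ,xa)` in `ℤ₂`. -/
noncomputable def Pr (r : ℕ) (σ : List Bool → List Bool) (x : List Bool) : ℤ_[2] :=
  (-1:ℤ_[2])^(par σ x) + Qr r σ (x ++ [true]) - Qr r σ (x ++ [false])

/-- `M_{r,∞}`: tree automorphisms for which `P_r(σ,·)` is constant. -/
def Mset (r : ℕ) : Set (List Bool → List Bool) :=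
  {σ | IsTreeAut σ ∧ ∀ x₁ x₂ : List Bool, Pr r σ x₁ = Pr r σ x₂}

/-- `B_{r,∞}`: elements of `M_{r,∞}` with common value `P_r(σ) = 1`. -/
def Bset (r : ℕ) : Set (List Bool → List Bool) :=
  {σ | σ ∈ Mset r ∧ Pr r σ [] = 1}

open Polynomial

/-- `M_{r,n}`: the set of restrictions of elements of `M_{r,∞}` to words of length at
most `n`. -/
def MsetN (r n : ℕ) : Set ({w : List Bool // w.length ≤ n} → List Bool) :=
  (fun σ => fun w : {w : List Bool // w.length ≤ n} => σ w.1) '' Mset r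

/-!
Fix roots of unity `ζ_j` of order `2^(j+1)` with `ζ_{j+1}² = ζ_j`. For a labeling `ℓ` put `S_0 = ℓ`
and `S_j(x) = ∏_{w ∈ W(r, j)} ℓ(xwa)`. Because `0` is periodic with `f^r(0) = 0`, the product of
`ℓ(xw)` over all words `w` of length `r` is `-ℓ(x)`, whence `S_{j+1}(x)² = ± S_j(x)` with a sign
depending only on `j`. The labeling can therefore be corrected level by level until
`S_j(xb) = ζ_j S_j(xa)` for all `x` and `j`. Comparing these relations with their images under a
Galois automorphism `σ` gives `σ(ζ_j) = ζ_j^{P_r(σ, x)}` at every node `x`. So the Galois group acts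
through `M_r`, and `P_r` becomes the cyclotomic character.

It remains to decide when the image is dense in the pro-2 group `M_r`. The group `B_r` is
topologically generated by `r` explicit automorphisms, so that its Frattini quotient is detected by
the signs of the first `r` levels, and an element of `M_r` with `P_r ≡ 1` modulo `8` lies in `B_r`
up to squares. Hence a closed subgroup of `M_r` is everything as soon as it realizes all
combinations of `r` level signs and a value of `P_r` modulo `8`. On the Galois side the level signs
are the Kummer characters of `√D_1, …, √D_r` and `P_r` modulo `8` is the action on `ζ_8`, and all
of these are seen at level `2r + 1`.
-/

/-! ### Portraits of tree automorphisms -/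

/-- The portrait of a tree automorphism `σ` marks the nodes `w` whose two children are swapped,
in the sense that `σ (w ++ [s]) = σ w ++ [s xor mark w]`. Portraits are in bijection with
automorphisms and carry the group structure of composition. -/
@[ext] structure Portrait where
  /-- Whether the children of a node are swapped. -/
  mark : List Bool → Bool

namespace Portrait

instance : CoeFun Portrait fun _ => List Bool → Bool := ⟨mark⟩

/-- The section of `e` at the node `x`, that is the portrait seen by the subtree below `x`. -/
def sec (e : Portrait) (x : List Bool) : Portrait := ⟨fun w => e (x ++ w)⟩

@[simp] lemma sec_apply (e : Portrait) (x w : List Bool) : e.sec x w = e (x ++ w) := rfl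

lemma sec_append (e : Portrait) (x y : List Bool) : e.sec (x ++ y) = (e.sec x).sec y := by
  ext w; simp

/-- The tree automorphism with portrait `e`. -/
def act : Portrait → List Bool → List Bool
  | _, [] => []
  | e, s :: w => xor s (e []) :: act (e.sec [s]) w

@[simp] lemma act_nil (e : Portrait) : e.act [] = [] := rfl

lemma act_cons (e : Portrait) (s : Bool) (w : List Bool) :
    e.act (s :: w) = xor s (e []) :: (e.sec [s]).act w := rfl

@[simp] lemma length_act (e : Portrait) (w : List Bool) : (e.act w).length = w.length := by
  induction w generalizing e with
  | nil => rfl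
  | cons s w ih => simp [act_cons, ih]

lemma act_append (e : Portrait) (x w : List Bool) :
    e.act (x ++ w) = e.act x ++ (e.sec x).act w := by
  induction x generalizing e with
  | nil => rfl
  | cons s x ih => simp only [List.cons_append, act_cons, ih, ← sec_append, List.nil_append]

lemma act_snoc (e : Portrait) (x : List Bool) (s : Bool) :
    e.act (x ++ [s]) = e.act x ++ [xor s (e x)] := by
  simp [act_append, act_cons]

/-- The inverse of `Portrait.act`, used to define inverse portraits. -/
def invAct : Portrait → List Bool → List Bool
  | _, [] => []
  | e, s :: w => xor s (e []) :: invAct (e.sec [xor s (e [])]) w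

lemma invAct_act (e : Portrait) (w : List Bool) : e.invAct (e.act w) = w := by
  induction w generalizing e with
  | nil => rfl
  | cons s w ih => simp [act_cons, invAct, ih]

instance : One Portrait := ⟨⟨fun _ => false⟩⟩
instance : Mul Portrait := ⟨fun e d => ⟨fun w => xor (d w) (e (d.act w))⟩⟩
instance : Inv Portrait := ⟨fun e => ⟨fun w => e (e.invAct w)⟩⟩

@[simp] lemma one_apply (w : List Bool) : (1 : Portrait) w = false := rfl

lemma mul_apply (e d : Portrait) (w : List Bool) : (e * d) w = xor (d w) (e (d.act w)) := rfl

@[simp] lemma sec_one (x : List Bool) : (1 : Portrait).sec x = 1 := rfl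

@[simp] lemma act_one (w : List Bool) : (1 : Portrait).act w = w := by
  induction w with
  | nil => rfl
  | cons s w ih => simp [act_cons, ih]

lemma act_mul (e d : Portrait) (w : List Bool) : (e * d).act w = e.act (d.act w) := by
  induction w using List.reverseRecOn with
  | nil => rfl
  | append_singleton w s ih => simp [act_snoc, ih, mul_apply]

instance : Group Portrait := Group.ofLeftAxioms
  (fun a b c => by ext w; simp [mul_apply, act_mul])
  (fun a => by ext w; simp [mul_apply])
  (fun a => by
    ext w
    rw [mul_apply, show a⁻¹ (a.act w) = a w from congrArg a (invAct_act a w)]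
    simp)

@[simp] lemma act_inv_act (e : Portrait) (w : List Bool) : e⁻¹.act (e.act w) = w := by
  simp [← act_mul]

@[simp] lemma act_act_inv (e : Portrait) (w : List Bool) : e.act (e⁻¹.act w) = w := by
  simp [← act_mul]

lemma isTreeAut_act (e : Portrait) : IsTreeAut e.act :=
  ⟨Function.bijective_iff_has_inverse.2 ⟨e⁻¹.act, act_inv_act e, act_act_inv e⟩,
    length_act e, fun w s => ⟨_, act_snoc e w s⟩⟩

lemma par_act (e : Portrait) (w : List Bool) : par e.act w = (e w).toNat := by
  cases h : e w <;> simp [par, act_snoc, h]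

lemma exists_act_eq {σ : List Bool → List Bool} (hσ : IsTreeAut σ) :
    ∃ e : Portrait, e.act = σ := by
  obtain ⟨hbij, hlen, hsnoc⟩ := hσ
  refine ⟨⟨fun w => decide (σ (w ++ [false]) ≠ σ w ++ [false])⟩, ?_⟩
  funext w
  induction w using List.reverseRecOn with
  | nil => exact (List.length_eq_zero_iff.1 (hlen [])).symm
  | append_singleton w s ih =>
    obtain ⟨t, ht⟩ := hsnoc w false
    obtain ⟨t', ht'⟩ := hsnoc w true
    have hne : t ≠ t' := by
      rintro rfl
      simpa using hbij.1 (ht.trans ht'.symm)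
    rw [act_snoc, ih]
    cases s
    · cases t <;> simp [ht]
    · cases t <;> cases t' <;> simp [ht, ht'] at hne ⊢

/-- Agreement of two automorphisms on the words of length at most `n`, equivalently of their
portraits on the nodes of level less than `n`. -/
def AgreeBelow (n : ℕ) (e d : Portrait) : Prop :=
  ∀ w : List Bool, w.length ≤ n → e.act w = d.act w

lemma AgreeBelow.refl (n : ℕ) (e : Portrait) : AgreeBelow n e e := fun _ _ => rfl

lemma AgreeBelow.symm {n : ℕ} {e d : Portrait} (h : AgreeBelow n e d) : AgreeBelow n d e :=
  fun w hw => (h w hw).symm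

lemma AgreeBelow.trans {n : ℕ} {e d f : Portrait} (h : AgreeBelow n e d)
    (h' : AgreeBelow n d f) : AgreeBelow n e f := fun w hw => (h w hw).trans (h' w hw)

/-- `Portrait.AgreeBelow n` as a congruence; its quotient is the automorphism group of the tree
truncated at level `n`. -/
def agreeCon (n : ℕ) : Con Portrait where
  r := AgreeBelow n
  iseqv := ⟨AgreeBelow.refl n, AgreeBelow.symm, AgreeBelow.trans⟩
  mul' h h' w hw := by rw [act_mul, act_mul, h' w hw, h _ (by simpa using hw)]

lemma AgreeBelow.mul {n : ℕ} {e d e' d' : Portrait} (h : AgreeBelow n e d)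
    (h' : AgreeBelow n e' d') : AgreeBelow n (e * e') (d * d') := (agreeCon n).mul h h'

lemma AgreeBelow.zpow {n : ℕ} {e d : Portrait} (h : AgreeBelow n e d) (t : ℤ) :
    AgreeBelow n (e ^ t) (d ^ t) := (agreeCon n).zpow t h

lemma AgreeBelow.mono {n m : ℕ} {e d : Portrait} (h : AgreeBelow n e d) (hm : m ≤ n) :
    AgreeBelow m e d := fun w hw => h w (hw.trans hm)

lemma AgreeBelow.apply_eq {n : ℕ} {e d : Portrait} (h : AgreeBelow n e d) {w : List Bool}
    (hw : w.length < n) : e w = d w := by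
  simpa [act_snoc, h w hw.le] using h (w ++ [false]) (by simpa using hw)

lemma agreeBelow_iff {n : ℕ} {e d : Portrait} :
    AgreeBelow n e d ↔ ∀ w : List Bool, w.length < n → e w = d w := by
  refine ⟨fun h w hw => h.apply_eq hw, fun h w hw => ?_⟩
  induction w using List.reverseRecOn with
  | nil => rfl
  | append_singleton w s ih =>
    rw [List.length_append, List.length_singleton] at hw
    rw [act_snoc, act_snoc, ih (by omega), h w hw]

lemma agreeBelow_zero (e d : Portrait) : AgreeBelow 0 e d :=
  agreeBelow_iff.2 fun _ hw => absurd hw (Nat.not_lt_zero _)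

/-- The portrait with mark `t` at the root and sections `g`, `h` at the two children. -/
def node (t : Bool) (g h : Portrait) : Portrait where
  mark
    | [] => t
    | false :: w => g w
    | true :: w => h w

@[simp] lemma node_nil (t : Bool) (g h : Portrait) : node t g h [] = t := rfl
@[simp] lemma node_false (t : Bool) (g h : Portrait) (w) : node t g h (false :: w) = g w := rfl
@[simp] lemma node_true (t : Bool) (g h : Portrait) (w) : node t g h (true :: w) = h w := rfl

@[simp] lemma sec_node_false (t : Bool) (g h : Portrait) : (node t g h).sec [false] = g := rfl
@[simp] lemma sec_node_true (t : Bool) (g h : Portrait) : (node t g h).sec [true] = h := rfl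

lemma node_eta (e : Portrait) : node (e []) (e.sec [false]) (e.sec [true]) = e := by
  ext1
  funext w
  rcases w with _ | ⟨_ | _, w⟩ <;> rfl

lemma node_mul_node_false (t : Bool) (g h g' h' : Portrait) :
    node t g h * node false g' h' = node t (g * g') (h * h') := by
  ext1
  funext w
  rcases w with _ | ⟨_ | _, w⟩ <;> simp [mul_apply, act_cons]

lemma node_mul_node_true (t : Bool) (g h g' h' : Portrait) :
    node t g h * node true g' h' = node (!t) (h * g') (g * h') := by
  ext1
  funext w
  rcases w with _ | ⟨_ | _, w⟩ <;> simp [mul_apply, act_cons]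

/-- The homomorphism `(g, h) ↦ node false g h` onto the stabiliser of the first level. -/
def nodeHom : Portrait × Portrait →* Portrait where
  toFun g := node false g.1 g.2
  map_one' := node_eta 1
  map_mul' g h := (node_mul_node_false false g.1 g.2 h.1 h.2).symm

@[simp] lemma nodeHom_apply (g : Portrait × Portrait) : nodeHom g = node false g.1 g.2 := rfl

lemma AgreeBelow.node {n : ℕ} {g h g' h' : Portrait} (t : Bool) (hg : AgreeBelow n g g')
    (hh : AgreeBelow n h h') : AgreeBelow (n + 1) (node t g h) (node t g' h') := by
  rw [agreeBelow_iff]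
  rintro (_ | ⟨_ | _, w⟩) hw
  · rfl
  · exact hg.apply_eq (by simpa using hw)
  · exact hh.apply_eq (by simpa using hw)

lemma exists_forall_of_levelwise (C : ℕ → Portrait → Prop)
    (hlocal : ∀ m (e d : Portrait), AgreeBelow (m + 1) e d → C m e → C m d)
    (hstep : ∀ m (e : Portrait), (∀ m' < m, C m' e) → ∃ d, AgreeBelow m d e ∧ C m d) :
    ∃ e : Portrait, ∀ m, C m e := by
  choose! next hnext_agree hnext using hstep
  let approx : ℕ → Portrait := fun n => Nat.rec 1 (fun m e => next m e) n
  have approx_cond : ∀ m, ∀ m' < m, C m' (approx m) := by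
    intro m
    induction m with
    | zero => intro m' h; omega
    | succ m ih =>
      intro m' hm'
      rcases Nat.lt_succ_iff_lt_or_eq.1 hm' with h | rfl
      · exact hlocal m' _ _ (((hnext_agree m _ ih).mono h).symm) (ih m' h)
      · exact hnext m' _ ih
  have approx_agree : ∀ m n, m ≤ n → AgreeBelow m (approx n) (approx m) := by
    intro m n hn
    induction n, hn using Nat.le_induction with
    | base => exact AgreeBelow.refl m _
    | succ n hn ih =>
      exact ((hnext_agree n _ (approx_cond n)).mono hn).trans ih
  refine ⟨⟨fun w => approx (w.length + 1) w⟩, fun m => ?_⟩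
  refine hlocal m (approx (m + 1)) _ (agreeBelow_iff.2 fun w hw => ?_)
    (approx_cond (m + 1) m (by omega))
  exact (approx_agree _ _ hw).apply_eq (Nat.lt_succ_self _)

end Portrait

/-! ### Sums and products over words -/

/-- The words of length `n`, that is the nodes of level `n`. -/
def words (n : ℕ) : Finset (List Bool) := (Finset.univ : Finset (Fin n → Bool)).image List.ofFn

@[simp] lemma mem_words {n : ℕ} {w : List Bool} : w ∈ words n ↔ w.length = n := by
  simp only [words, Finset.mem_image, Finset.mem_univ, true_and]
  refine ⟨?_, ?_⟩
  · rintro ⟨f, rfl⟩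
    exact List.length_ofFn
  · rintro rfl
    exact ⟨w.get, List.ofFn_get w⟩

@[simp] lemma words_zero : words 0 = {[]} := by
  ext w; simp

lemma card_words (n : ℕ) : (words n).card = 2 ^ n := by
  rw [words, Finset.card_image_of_injective _ List.ofFn_injective]
  simp

lemma words_succ (n : ℕ) :
    words (n + 1) = (words n).image (List.cons false) ∪ (words n).image (List.cons true) := by
  ext w
  rcases w with _ | ⟨_ | _, w⟩ <;> simp

section BigOperators

variable {M : Type*} [CommMonoid M]

@[to_additive]
lemma prod_words_succ (n : ℕ) (g : List Bool → M) :
    ∏ u ∈ words (n + 1), g u =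
      (∏ u ∈ words n, g (false :: u)) * ∏ u ∈ words n, g (true :: u) := by
  rw [words_succ, Finset.prod_union, Finset.prod_image, Finset.prod_image]
  · exact fun a _ b _ h => List.cons_injective h
  · exact fun a _ b _ h => List.cons_injective h
  · simp [Finset.disjoint_left]

@[to_additive]
lemma prod_words_act (n : ℕ) (e : Portrait) (x : List Bool) (g : List Bool → M) :
    ∏ u ∈ words n, g (e.act (x ++ u)) = ∏ u ∈ words n, g (e.act x ++ u) := by
  simp_rw [Portrait.act_append]
  refine Finset.prod_nbij' (e.sec x).act (e.sec x)⁻¹.act ?_ ?_ ?_ ?_ ?_ <;> simp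

end BigOperators

lemma mem_Wset {r i : ℕ} {w : List Bool} :
    w ∈ Wset r i ↔ w.length = r * i - 1 ∧ ∀ j, r ∣ j + 1 → w[j]? ≠ some true := by
  simp only [Wset, Finset.mem_image, Finset.mem_filter, Finset.mem_univ, true_and]
  refine ⟨?_, fun ⟨hlen, hw⟩ => ?_⟩
  · rintro ⟨s, hs, rfl⟩
    refine ⟨List.length_ofFn, fun j hj h => ?_⟩
    obtain ⟨hj', h⟩ := List.getElem?_eq_some_iff.1 h
    rw [List.length_ofFn] at hj'
    simp [hs ⟨j, hj'⟩ hj] at h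
  · refine ⟨fun j => w[(j : ℕ)]'(by omega), fun j hj => ?_,
      List.ext_getElem (by simp [hlen]) (by simp)⟩
    have hj' : (j : ℕ) < w.length := by omega
    simpa [List.getElem?_eq_getElem hj'] using hw j hj

lemma length_of_mem_Wset {r i : ℕ} {w : List Bool} (hw : w ∈ Wset r i) :
    w.length = r * i - 1 := (mem_Wset.1 hw).1

lemma Wset_one (r : ℕ) : Wset r 1 = words (r - 1) := by
  ext w
  rw [mem_Wset, mem_words, mul_one]
  refine ⟨fun h => h.1, fun h => ⟨h, fun j hj => ?_⟩⟩
  have := Nat.le_of_dvd j.succ_pos hj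
  rw [List.getElem?_eq_none (by omega)]
  simp

section NeZero

variable {r : ℕ} [NeZero r]

lemma Wset_add_two (i : ℕ) :
    Wset r (i + 2) =
      (words (r - 1) ×ˢ Wset r (i + 1)).image fun p => p.1 ++ false :: p.2 := by
  have hr : 0 < r := NeZero.pos r
  have hmul : r * (i + 2) = r + r * (i + 1) := by ring
  have hle : r ≤ r * (i + 1) := Nat.le_mul_of_pos_right r i.succ_pos
  ext w
  simp only [Finset.mem_image, Finset.mem_product, Prod.exists, mem_words, mem_Wset]
  constructor
  · rintro ⟨hlen, hw⟩
    refine ⟨w.take (r - 1), w.drop r, ⟨by simp; omega, by simp; omega, fun j hj => ?_⟩, ?_⟩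
    · rw [List.getElem?_drop]
      exact hw _ (by rw [add_assoc]; exact Nat.dvd_add (dvd_refl r) hj)
    · have hlt : r - 1 < w.length := by omega
      have hmark := hw (r - 1) (by rw [Nat.sub_add_cancel hr])
      rw [List.getElem?_eq_getElem hlt] at hmark
      have hget : w[r - 1] = false := by simpa using hmark
      conv_rhs => rw [← List.take_append_drop (r - 1) w]
      rw [List.drop_eq_getElem_cons hlt, hget, Nat.sub_add_cancel hr]
  · rintro ⟨u, v, ⟨hu, hvlen, hv⟩, rfl⟩
    refine ⟨by simp [hu, hvlen]; omega, fun j hj => ?_⟩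
    have hrj := Nat.le_of_dvd j.succ_pos hj
    rw [List.getElem?_append_right (by omega), hu]
    rcases Nat.eq_or_lt_of_le hrj with h | h
    · simp [show j - (r - 1) = 0 by omega]
    · rw [show j - (r - 1) = (j - r) + 1 by omega, List.getElem?_cons_succ]
      rw [show j + 1 = r + (j - r + 1) by omega] at hj
      exact hv _ ((Nat.dvd_add_right (dvd_refl r)).1 hj)

@[to_additive]
lemma prod_Wset_add_two {M : Type*} [CommMonoid M] (i : ℕ) (g : List Bool → M) :
    ∏ w ∈ Wset r (i + 2), g w =
      ∏ u ∈ words (r - 1), ∏ w ∈ Wset r (i + 1), g (u ++ false :: w) := by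
  rw [Wset_add_two, Finset.prod_image, Finset.prod_product]
  rintro ⟨a, b⟩ h ⟨a', b'⟩ h' heq
  simp only [Finset.coe_product, Set.mem_prod, Finset.mem_coe, mem_words] at h h'
  simpa using List.append_inj heq (by simp [h.1, h'.1])

end NeZero

/-! ### The invariants `Q_r`, `P_r` and their truncations -/

/-- The sum of the first `j` terms of `Q_r(e, x)`. -/
noncomputable def truncQ (r j : ℕ) (e : Portrait) (x : List Bool) : ℤ :=
  ∑ i ∈ Finset.range j, 2 ^ (i + 1) * ∑ w ∈ Wset r (i + 1), ((e (x ++ w)).toNat : ℤ)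

/-- The integer obtained from `P_r(e, y)` by replacing `Q_r` by its truncation `truncQ r j`. -/
noncomputable def truncP (r j : ℕ) (e : Portrait) (y : List Bool) : ℤ :=
  (-1) ^ (e y).toNat + truncQ r j e (y ++ [true]) - truncQ r j e (y ++ [false])

lemma neg_one_pow_toNat {R : Type*} [CommRing R] (b : Bool) :
    (-1 : R) ^ b.toNat = 1 - 2 * (b.toNat : R) := by
  cases b
  · simp
  · norm_num

lemma Pr_act (r : ℕ) (e : Portrait) (x : List Bool) :
    Pr r e.act x =
      1 - 2 * ((e x).toNat : ℤ_[2]) + Qr r e.act (x ++ [true]) - Qr r e.act (x ++ [false]) := by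
  rw [Pr, Portrait.par_act, neg_one_pow_toNat]

lemma Qr_append (r : ℕ) (e : Portrait) (x y : List Bool) :
    Qr r e.act (x ++ y) = Qr r (e.sec x).act y := by
  simp [Qr, Portrait.par_act]

lemma Pr_append (r : ℕ) (e : Portrait) (x y : List Bool) :
    Pr r e.act (x ++ y) = Pr r (e.sec x).act y := by
  simp [Pr_act, Qr_append]

@[simp] lemma Qr_one (r : ℕ) (x : List Bool) : Qr r (1 : Portrait).act x = 0 := by
  simp [Qr, Portrait.par_act]

@[simp] lemma Pr_one (r : ℕ) (x : List Bool) : Pr r (1 : Portrait).act x = 1 := by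
  simp [Pr_act]

@[simp] lemma truncQ_zero (r : ℕ) (e : Portrait) (x : List Bool) : truncQ r 0 e x = 0 := by
  simp [truncQ]

lemma truncQ_succ {r : ℕ} [NeZero r] (j : ℕ) (e : Portrait) (x : List Bool) :
    truncQ r (j + 1) e x = 2 * ∑ u ∈ words (r - 1),
      (((e (x ++ u)).toNat : ℤ) + truncQ r j e (x ++ u ++ [false])) := by
  rw [truncQ, Finset.sum_range_succ', Finset.sum_add_distrib, mul_add, add_comm]
  congr 1
  · simp [Wset_one]
  · simp only [truncQ]
    rw [Finset.sum_comm, Finset.mul_sum]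
    refine Finset.sum_congr rfl fun i _ => ?_
    rw [sum_Wset_add_two, pow_succ, mul_comm _ (2 : ℤ), mul_assoc, Finset.mul_sum]
    simp

lemma truncP_succ (r j : ℕ) (e : Portrait) (y : List Bool) :
    truncP r (j + 1) e y = truncP r j e y + 2 ^ (j + 1) *
      (∑ w ∈ Wset r (j + 1), ((e (y ++ [true] ++ w)).toNat : ℤ) -
       ∑ w ∈ Wset r (j + 1), ((e (y ++ [false] ++ w)).toNat : ℤ)) := by
  simp only [truncP, truncQ, Finset.sum_range_succ]
  ring

lemma two_dvd_truncP_zero_sub_one (r : ℕ) (e : Portrait) (y : List Bool) :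
    2 ∣ truncP r 0 e y - 1 :=
  ⟨-(e y).toNat, by rw [truncP, truncQ_zero, truncQ_zero, neg_one_pow_toNat]; ring⟩

lemma truncQ_eq_of_agreeBelow {r n j : ℕ} [NeZero r] {e d : Portrait}
    (h : Portrait.AgreeBelow n e d) {x : List Bool} (hx : x.length + r * j ≤ n) :
    truncQ r j e x = truncQ r j d x := by
  refine Finset.sum_congr rfl fun i hi => congrArg _ (Finset.sum_congr rfl fun w hw => ?_)
  have hij : r * (i + 1) ≤ r * j := Nat.mul_le_mul_left r (Finset.mem_range.1 hi)
  have hpos : 0 < r * (i + 1) := Nat.mul_pos (NeZero.pos r) i.succ_pos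
  rw [h.apply_eq (by simp [length_of_mem_Wset hw]; omega)]

lemma truncP_eq_of_agreeBelow {r n j : ℕ} [NeZero r] {e d : Portrait}
    (h : Portrait.AgreeBelow n e d) {y : List Bool} (hy : y.length + r * j + 1 ≤ n) :
    truncP r j e y = truncP r j d y := by
  rw [truncP, truncP, truncQ_eq_of_agreeBelow h (by simp; omega),
    truncQ_eq_of_agreeBelow h (by simp; omega), h.apply_eq (by omega)]

lemma two_pow_dvd_intCast_iff (n : ℕ) (z : ℤ) :
    (2 : ℤ_[2]) ^ n ∣ (z : ℤ_[2]) ↔ (2 : ℤ) ^ n ∣ z := by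
  simpa using PadicInt.pow_p_dvd_int_iff (p := 2) n z

lemma eq_zero_of_forall_two_pow_dvd {z : ℤ_[2]} (h : ∀ j : ℕ, (2 : ℤ_[2]) ^ j ∣ z) :
    z = 0 := by
  by_contra hz
  have hval : (2 : ℤ_[2]) ^ (z.valuation + 1) ∣ z := h _
  have htwo : (2 : ℤ_[2]) = ((2 : ℕ) : ℤ_[2]) := by norm_num
  rw [htwo, ← PadicInt.norm_le_pow_iff_mem_span_pow z _ |>.trans Ideal.mem_span_singleton,
    PadicInt.norm_eq_zpow_neg_valuation hz] at hval
  have := (zpow_le_zpow_iff_right₀ (a := ((2 : ℕ) : ℝ)) (by norm_num)).1 hval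
  push_cast at this
  omega

lemma summable_two_pow_mul (a : ℕ → ℤ_[2]) : Summable fun i : ℕ => (2 : ℤ_[2]) ^ i * a i := by
  have htwo : ‖(2 : ℤ_[2])‖ = 1 / 2 := by simpa using PadicInt.norm_p (p := 2)
  refine Summable.of_norm_bounded
    (summable_geometric_of_lt_one (r := (1 / 2 : ℝ)) (by norm_num) (by norm_num)) fun i => ?_
  rw [norm_mul, norm_pow, htwo]
  exact mul_le_of_le_one_right (by positivity) (PadicInt.norm_le_one _)

lemma two_pow_dvd_Qr_sub_truncQ (r j : ℕ) (e : Portrait) (x : List Bool) :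
    (2 : ℤ_[2]) ^ (j + 1) ∣ Qr r e.act x - truncQ r j e x := by
  let a : ℕ → ℤ_[2] := fun i => ∑ w ∈ Wset r (i + 1), (par e.act (x ++ w) : ℤ_[2])
  have hsplit : Qr r e.act x = ∑ i ∈ Finset.range j, 2 ^ (i + 1) * a i +
      ∑' i, (2 : ℤ_[2]) ^ (i + j + 1) * a (i + j) := by
    refine (Summable.sum_add_tsum_nat_add (f := fun i => (2 : ℤ_[2]) ^ (i + 1) * a i) j ?_).symm
    simpa only [pow_succ, mul_assoc] using summable_two_pow_mul fun i => 2 * a i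
  have htrunc : (truncQ r j e x : ℤ_[2]) = ∑ i ∈ Finset.range j, 2 ^ (i + 1) * a i := by
    simp [truncQ, a, Portrait.par_act]
  have htail : ∀ i, (2 : ℤ_[2]) ^ (i + j + 1) * a (i + j) = 2 ^ (j + 1) * (2 ^ i * a (i + j)) :=
    fun i => by ring
  rw [hsplit, htrunc, add_sub_cancel_left, tsum_congr htail,
    (summable_two_pow_mul _).tsum_mul_left]
  exact dvd_mul_right _ _

lemma two_pow_dvd_Pr_sub_truncP (r j : ℕ) (e : Portrait) (y : List Bool) :
    (2 : ℤ_[2]) ^ (j + 1) ∣ Pr r e.act y - truncP r j e y := by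
  convert dvd_sub (two_pow_dvd_Qr_sub_truncQ r j e (y ++ [true]))
    (two_pow_dvd_Qr_sub_truncQ r j e (y ++ [false])) using 1
  rw [Pr, truncP, Portrait.par_act]
  push_cast
  ring

lemma two_pow_dvd_Qr_sub_of_agreeBelow {r n j : ℕ} [NeZero r] {e d : Portrait}
    (h : Portrait.AgreeBelow n e d) (hj : r * j ≤ n) :
    (2 : ℤ_[2]) ^ (j + 1) ∣ Qr r e.act [] - Qr r d.act [] := by
  have := dvd_sub (two_pow_dvd_Qr_sub_truncQ r j e []) (two_pow_dvd_Qr_sub_truncQ r j d [])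
  rw [truncQ_eq_of_agreeBelow h (by simpa using hj)] at this
  simpa using this

section NeZero

variable {r : ℕ} [NeZero r]

lemma Qr_eq_two_mul_sum (e : Portrait) (x : List Bool) :
    Qr r e.act x = 2 * ∑ u ∈ words (r - 1),
      (((e (x ++ u)).toNat : ℤ_[2]) + Qr r e.act (x ++ u ++ [false])) := by
  rw [← sub_eq_zero]
  refine eq_zero_of_forall_two_pow_dvd fun j => ?_
  have hlhs := (pow_dvd_pow 2 (show j ≤ j + 1 + 1 by omega)).trans
    (two_pow_dvd_Qr_sub_truncQ r (j + 1) e x)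
  have hrhs : (2 : ℤ_[2]) ^ j ∣ 2 * ∑ u ∈ words (r - 1),
      (((e (x ++ u)).toNat : ℤ_[2]) + Qr r e.act (x ++ u ++ [false])) - truncQ r (j + 1) e x := by
    rw [truncQ_succ]
    push_cast
    rw [← mul_sub, ← Finset.sum_sub_distrib]
    refine Dvd.dvd.mul_left (Finset.dvd_sum fun u _ => ?_) _
    rw [add_sub_add_left_eq_sub]
    exact (pow_dvd_pow 2 j.le_succ).trans (two_pow_dvd_Qr_sub_truncQ r j e _)
  simpa using dvd_sub hlhs hrhs

/-! ### The groups `M_r` and `B_r` -/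

lemma Qr_mul {c : ℤ_[2]} {e : Portrait} (he : ∀ y, Pr r e.act y = c) (d : Portrait)
    (x : List Bool) : Qr r (e * d).act x = Qr r e.act (d.act x) + c * Qr r d.act x := by
  rw [← sub_eq_zero]
  refine eq_zero_of_forall_two_pow_dvd fun j => ?_
  induction j generalizing x with
  | zero => simp
  | succ j ih =>
    rw [Qr_eq_two_mul_sum (e * d) x, Qr_eq_two_mul_sum e (d.act x), Qr_eq_two_mul_sum d x,
      ← sum_words_act (r - 1) d x fun w => ((e w).toNat : ℤ_[2]) + Qr r e.act (w ++ [false]),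
      mul_left_comm c, ← mul_add, ← mul_sub, pow_succ', Finset.mul_sum,
      ← Finset.sum_add_distrib, ← Finset.sum_sub_distrib]
    refine mul_dvd_mul_left _ (Finset.dvd_sum fun u _ => ?_)
    have hP := he (d.act (x ++ u))
    rw [Pr_act] at hP
    convert ih (x ++ u ++ [false]) using 1
    rw [Portrait.act_snoc, Portrait.mul_apply, ← hP]
    cases d (x ++ u) <;> cases e (d.act (x ++ u)) <;> simp <;> ring

lemma Pr_mul {c : ℤ_[2]} {e : Portrait} (he : ∀ y, Pr r e.act y = c) (d : Portrait)
    (x : List Bool) : Pr r (e * d).act x = c * Pr r d.act x := by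
  have hP := he (d.act x)
  rw [Pr_act] at hP
  rw [Pr_act, Qr_mul he, Qr_mul he, Pr_act r d, Portrait.act_snoc, Portrait.act_snoc,
    Portrait.mul_apply, ← hP]
  cases d x <;> cases e (d.act x) <;> simp <;> ring

lemma Pr_mul_Pr_inv {c : ℤ_[2]} {e : Portrait} (he : ∀ y, Pr r e.act y = c) (x : List Bool) :
    c * Pr r e⁻¹.act x = 1 := by
  rw [← Pr_mul he, mul_inv_cancel, Pr_one]

variable (r) in
/-- `M_{r,∞}` as a group of portraits. -/
def Mgroup : Subgroup Portrait where
  carrier := {e | ∀ x, Pr r e.act x = Pr r e.act []}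
  one_mem' x := by simp
  mul_mem' {a b} ha hb x := by rw [Pr_mul ha, Pr_mul ha, hb]
  inv_mem' {a} ha x := by
    have hne : Pr r a.act [] ≠ 0 := left_ne_zero_of_mul_eq_one (Pr_mul_Pr_inv ha [])
    exact mul_left_cancel₀ hne ((Pr_mul_Pr_inv ha x).trans (Pr_mul_Pr_inv ha []).symm)

variable (r) in
/-- `B_{r,∞}` as a group of portraits. -/
def Bgroup : Subgroup Portrait where
  carrier := {e | ∀ x, Pr r e.act x = 1}
  one_mem' := Pr_one r
  mul_mem' {a b} ha hb x := by rw [Pr_mul ha, hb, one_mul]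
  inv_mem' {a} ha x := by rw [← one_mul (Pr r _ x), Pr_mul_Pr_inv ha]

lemma mem_Mgroup_of_forall {e : Portrait} {c : ℤ_[2]} (he : ∀ x, Pr r e.act x = c) :
    e ∈ Mgroup r := fun x => (he x).trans (he []).symm

lemma Bgroup_le_Mgroup : Bgroup r ≤ Mgroup r := fun _ => mem_Mgroup_of_forall

lemma mem_Mset_iff (σ : List Bool → List Bool) : σ ∈ Mset r ↔ ∃ e ∈ Mgroup r, e.act = σ := by
  constructor
  · rintro ⟨hσ, hP⟩
    obtain ⟨e, rfl⟩ := Portrait.exists_act_eq hσ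
    exact ⟨e, fun x => hP x [], rfl⟩
  · rintro ⟨e, he, rfl⟩
    exact ⟨Portrait.isTreeAut_act e, fun x y => (he x).trans (he y).symm⟩

end NeZero

/-! ### Signs of levels -/

/-- The sign `-1` of a swap and `1` of a non-swap. -/
def swapSign (b : Bool) : ℤˣ := (-1) ^ b.toNat

@[simp] lemma swapSign_false : swapSign false = 1 := rfl
@[simp] lemma swapSign_true : swapSign true = -1 := rfl

lemma swapSign_xor (a b : Bool) : swapSign (xor a b) = swapSign a * swapSign b := by
  cases a <;> cases b <;> rfl

/-- The sign with which an automorphism permutes the words of length `i + 1`. -/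
def levelSign (i : ℕ) : Portrait →* ℤˣ where
  toFun e := ∏ w ∈ words i, swapSign (e w)
  map_one' := by simp
  map_mul' e d := by
    have h := prod_words_act i d [] fun w => swapSign (e w)
    simp only [List.nil_append, Portrait.act_nil] at h
    simp_rw [Portrait.mul_apply, swapSign_xor, Finset.prod_mul_distrib, h, mul_comm]

lemma levelSign_apply (i : ℕ) (e : Portrait) :
    levelSign i e = ∏ w ∈ words i, swapSign (e w) := rfl

lemma levelSign_eq_of_agreeBelow {i n : ℕ} (hi : i < n) {e d : Portrait}
    (h : Portrait.AgreeBelow n e d) : levelSign i e = levelSign i d :=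
  Finset.prod_congr rfl fun w hw => by rw [h.apply_eq (by rwa [mem_words.1 hw])]

/-! ### Topological generators of `B_r` -/

/-- The marks of the automorphism `gen r i`. -/
def genMark (r : ℕ) : ℕ → List Bool → Bool
  | 0, [] => true
  | _ + 1, [] => false
  | 0, false :: _ => false
  | 0, true :: w => genMark r (r - 1) w
  | i + 1, false :: w => genMark r i w
  | _ + 1, true :: _ => false

/-- The automorphisms `gen r 0, …, gen r (r - 1)`, which topologically generate `B_{r,∞}`. They
are given by the recursion of `gen_zero` and `gen_succ`. -/
def gen (r i : ℕ) : Portrait := ⟨genMark r i⟩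

lemma gen_zero (r : ℕ) : gen r 0 = Portrait.node true 1 (gen r (r - 1)) := by
  ext1
  funext w
  rcases w with _ | ⟨_ | _, w⟩ <;> simp [gen, genMark]

lemma gen_succ (r i : ℕ) : gen r (i + 1) = Portrait.node false (gen r i) 1 := by
  ext1
  funext w
  rcases w with _ | ⟨_ | _, w⟩ <;> simp [gen, genMark]

lemma nodeHom_gen_one (r i : ℕ) : Portrait.nodeHom (gen r i, 1) = gen r (i + 1) :=
  (gen_succ r i).symm

@[to_additive]
lemma prod_words_sec_gen {M : Type*} [CommMonoid M] {φ : Portrait → M} (hφ : φ 1 = 1)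
    {r m i : ℕ} (hm : m < r) :
    ∏ u ∈ words m, φ ((gen r i).sec u) = φ (gen r (if m ≤ i then i - m else i + r - m)) := by
  induction m generalizing i with
  | zero => simp; rfl
  | succ m ih =>
    have sec_false (t g h u) : (Portrait.node t g h).sec (false :: u) = g.sec u := rfl
    have sec_true (t g h u) : (Portrait.node t g h).sec (true :: u) = h.sec u := rfl
    rw [prod_words_succ]
    cases i with
    | zero =>
      simp only [gen_zero, sec_false, sec_true, Portrait.sec_one, hφ, Finset.prod_const_one,
        one_mul]
      rw [ih (by omega), if_pos (by omega), if_neg (by omega)]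
      congr 2
      omega
    | succ i =>
      simp only [gen_succ, sec_false, sec_true, Portrait.sec_one, hφ, Finset.prod_const_one,
        mul_one]
      rw [ih (by omega)]
      congr 2
      split_ifs <;> omega

lemma gen_nil (r i : ℕ) : gen r i [] = decide (i = 0) := by
  cases i <;> rfl

lemma levelSign_gen {r i j : ℕ} (hj : j < r) :
    levelSign j (gen r i) = if i = j then -1 else 1 := by
  have h := prod_words_sec_gen (φ := fun e => swapSign (e [])) (i := i) rfl hj
  simp only [Portrait.sec_apply, List.append_nil, gen_nil] at h
  rw [levelSign_apply, h]
  by_cases hij : i = j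
  · simp [hij]
  · rw [if_neg hij, decide_eq_false (by split_ifs <;> omega), swapSign_false]

section NeZero

variable {r : ℕ} [NeZero r]

lemma Qr_gen {i : ℕ} (hi : i < r) : Qr r (gen r i).act [] = if i + 1 = r then 2 else 0 := by
  have h := sum_words_sec_gen
    (φ := fun e => ((e []).toNat : ℤ_[2]) + Qr r e.act [false]) (i := i) (by simp)
    (show r - 1 < r by omega)
  simp only [Portrait.sec_apply, List.append_nil, ← Qr_append] at h
  have hrec := Qr_eq_two_mul_sum (r := r) (gen r i) []
  simp only [List.nil_append] at hrec
  rw [h] at hrec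
  split_ifs at hrec ⊢ with h₁ h₂ h₂
  · rw [hrec, show i - (r - 1) = 0 by omega, gen_zero, ← List.append_nil [false], Qr_append]
    simp
  · omega
  · omega
  · rw [show i + r - (r - 1) = i + 1 by omega, gen_succ, ← List.append_nil [false], Qr_append]
      at hrec
    simp only [Portrait.node_nil, Portrait.sec_node_false, Bool.toNat_false, Nat.cast_zero,
      zero_add] at hrec
    linear_combination -hrec

lemma node_mem_Bgroup_iff {t : Bool} {g h : Portrait} :
    Portrait.node t g h ∈ Bgroup r ↔ g ∈ Bgroup r ∧ h ∈ Bgroup r ∧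
      Qr r h.act [] - Qr r g.act [] = 2 * (t.toNat : ℤ_[2]) := by
  have hcons (s : Bool) (x : List Bool) :
      Pr r (Portrait.node t g h).act (s :: x) = Pr r ((Portrait.node t g h).sec [s]).act x :=
    Pr_append r _ [s] x
  have hnil : Pr r (Portrait.node t g h).act [] =
      1 - 2 * (t.toNat : ℤ_[2]) + Qr r h.act [] - Qr r g.act [] := by
    rw [Pr_act, List.nil_append, List.nil_append, ← List.append_nil [true],
      ← List.append_nil [false], Qr_append, Qr_append]
    rfl
  refine ⟨fun hmem => ⟨fun x => ?_, fun x => ?_, ?_⟩, ?_⟩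
  · simpa [hcons] using hmem (false :: x)
  · simpa [hcons] using hmem (true :: x)
  · linear_combination hmem [] - hnil
  · rintro ⟨hg, hh, hQ⟩ (_ | ⟨_ | _, x⟩)
    · linear_combination hQ + hnil
    · simpa [hcons] using hg x
    · simpa [hcons] using hh x

lemma gen_mem_Bgroup {i : ℕ} (hi : i < r) : gen r i ∈ Bgroup r := by
  intro y
  induction y generalizing i with
  | nil =>
    rw [Pr_act, List.nil_append, List.nil_append, ← List.append_nil [true],
      ← List.append_nil [false], Qr_append, Qr_append]
    cases i with
    | zero => simp [gen_zero, Qr_gen (show r - 1 < r by omega), show r - 1 + 1 = r by omega]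
    | succ i => simp [gen_succ, Qr_gen (show i < r by omega), show i + 1 ≠ r by omega]
  | cons s y ih =>
    rw [← List.singleton_append, Pr_append]
    cases i with
    | zero => cases s <;> simp [gen_zero, ih (show r - 1 < r by omega)]
    | succ i => cases s <;> simp [gen_succ, ih (show i < r by omega)]

end NeZero

lemma gen_zero_sq (r : ℕ) :
    gen r 0 ^ 2 = Portrait.nodeHom (gen r (r - 1), gen r (r - 1)) := by
  rw [sq, gen_zero, Portrait.node_mul_node_true]
  simp

lemma gen_pow_two_pow_agreeBelow (r J i : ℕ) :
    Portrait.AgreeBelow (i + r * J) (gen r i ^ 2 ^ J) 1 := by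
  have node_one {n : ℕ} {g h : Portrait} (hg : Portrait.AgreeBelow n g 1)
      (hh : Portrait.AgreeBelow n h 1) : Portrait.AgreeBelow (n + 1) (Portrait.nodeHom (g, h)) 1 :=
    map_one Portrait.nodeHom ▸ hg.node false hh
  have succ (J i : ℕ) (h : Portrait.AgreeBelow (i + r * J) (gen r i ^ 2 ^ J) 1) :
      Portrait.AgreeBelow (i + 1 + r * J) (gen r (i + 1) ^ 2 ^ J) 1 := by
    rw [← nodeHom_gen_one, ← map_pow, Prod.pow_mk, one_pow]
    exact (node_one h (.refl _ _)).mono (by omega)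
  induction J generalizing i with
  | zero =>
    induction i with
    | zero => exact Portrait.agreeBelow_zero _ _
    | succ i ih => exact succ 0 i ih
  | succ J ih =>
    induction i with
    | zero =>
      rw [pow_succ', pow_mul, gen_zero_sq, ← map_pow, Prod.pow_mk]
      exact (node_one (ih (r - 1)) (ih (r - 1))).mono (by rw [mul_add]; omega)
    | succ i ih' => exact succ (J + 1) i ih'

/-- The dense subgroup of `B_{r,∞}` generated by the automorphisms `gen r i` with `i < r`. -/
def genGroup (r : ℕ) : Subgroup Portrait := Subgroup.closure (gen r '' Set.Iio r)

lemma gen_mem_genGroup {r i : ℕ} (hi : i < r) : gen r i ∈ genGroup r :=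
  Subgroup.subset_closure ⟨i, hi, rfl⟩

/-- The automorphisms `g` such that `genGroup r` contains the automorphism acting as `g` below the
node `a` and trivially below the node `b`. -/
def genGroupLeft (r : ℕ) : Subgroup Portrait :=
  (genGroup r).comap (Portrait.nodeHom.comp (MonoidHom.inl Portrait Portrait))

lemma mem_genGroupLeft {r : ℕ} {g : Portrait} :
    g ∈ genGroupLeft r ↔ Portrait.nodeHom (g, 1) ∈ genGroup r := Iff.rfl

section NeZero

variable {r : ℕ} [NeZero r]

lemma genGroup_le_Bgroup : genGroup r ≤ Bgroup r := by
  rw [genGroup, Subgroup.closure_le]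
  rintro _ ⟨i, hi, rfl⟩
  exact gen_mem_Bgroup hi

lemma exists_nodeHom_mem_genGroup {g : Portrait} (hg : g ∈ genGroup r) :
    ∃ h, Portrait.nodeHom (g, h) ∈ genGroup r := by
  suffices genGroup r ≤ ((genGroup r).comap Portrait.nodeHom).map (MonoidHom.fst _ _) by
    obtain ⟨⟨_, h⟩, hh, rfl⟩ := this hg
    exact ⟨h, hh⟩
  refine (Subgroup.closure_le _).2 ?_
  rintro _ ⟨i, hi, rfl⟩
  by_cases h : i + 1 < r
  · refine ⟨(gen r i, 1), Subgroup.mem_comap.2 ?_, rfl⟩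
    exact nodeHom_gen_one r i ▸ gen_mem_genGroup h
  · obtain rfl : i = r - 1 := by rw [Set.mem_Iio] at hi; omega
    refine ⟨(gen r (r - 1), gen r (r - 1)), Subgroup.mem_comap.2 ?_, rfl⟩
    exact gen_zero_sq r ▸ pow_mem (gen_mem_genGroup (NeZero.pos r)) 2

lemma conj_mem_genGroupLeft {g n : Portrait} (hg : g ∈ genGroup r) (hn : n ∈ genGroupLeft r) :
    g * n * g⁻¹ ∈ genGroupLeft r := by
  obtain ⟨h, hh⟩ := exists_nodeHom_mem_genGroup hg
  rw [mem_genGroupLeft] at hn ⊢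
  simpa only [← map_mul, ← map_inv, Prod.mk_mul_mk, Prod.inv_mk, mul_one, mul_inv_cancel]
    using mul_mem (mul_mem hh hn) (inv_mem hh)

lemma nodeHom_one_mem_genGroup {n : Portrait} (hn : n ∈ genGroupLeft r) :
    Portrait.nodeHom (1, n) ∈ genGroup r := by
  have h₀ : gen r 0 ∈ genGroup r := gen_mem_genGroup (NeZero.pos r)
  have hswap : Portrait.nodeHom (1, n) * gen r 0 = gen r 0 * Portrait.nodeHom (n, 1) := by
    simp [gen_zero, Portrait.node_mul_node_false, Portrait.node_mul_node_true]
  rw [eq_mul_inv_of_mul_eq hswap]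
  exact mul_mem (mul_mem h₀ hn) (inv_mem h₀)

lemma exists_eq_mul_gen_zpow {g : Portrait} (hg : g ∈ genGroup r) :
    ∃ n ∈ genGroupLeft r, ∃ t : ℤ, g = n * gen r (r - 1) ^ t := by
  have hlast : gen r (r - 1) ∈ genGroup r := gen_mem_genGroup (Nat.sub_one_lt (NeZero.ne r))
  induction hg using Subgroup.closure_induction with
  | mem x hx =>
    obtain ⟨i, hi, rfl⟩ := hx
    by_cases h : i + 1 < r
    · exact ⟨gen r i, mem_genGroupLeft.2 (nodeHom_gen_one r i ▸ gen_mem_genGroup h), 0, by simp⟩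
    · obtain rfl : i = r - 1 := by rw [Set.mem_Iio] at hi; omega
      exact ⟨1, one_mem _, 1, by simp⟩
  | one => exact ⟨1, one_mem _, 0, by simp⟩
  | mul x y _ _ hx hy =>
    obtain ⟨n, hn, t, rfl⟩ := hx
    obtain ⟨n', hn', t', rfl⟩ := hy
    refine ⟨n * (gen r (r - 1) ^ t * n' * (gen r (r - 1) ^ t)⁻¹),
      mul_mem hn (conj_mem_genGroupLeft (zpow_mem hlast t) hn'), t + t', ?_⟩
    rw [zpow_add]
    group
  | inv x _ hx =>
    obtain ⟨n, hn, t, rfl⟩ := hx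
    refine ⟨gen r (r - 1) ^ (-t) * n⁻¹ * (gen r (r - 1) ^ (-t))⁻¹,
      conj_mem_genGroupLeft (zpow_mem hlast _) (inv_mem hn), -t, ?_⟩
    group

lemma Qr_mul_of_mem_Bgroup {e : Portrait} (he : e ∈ Bgroup r) (d : Portrait) :
    Qr r (e * d).act [] = Qr r e.act [] + Qr r d.act [] := by
  rw [Qr_mul he, Portrait.act_nil, one_mul]

lemma Qr_zpow_of_mem_Bgroup {e : Portrait} (he : e ∈ Bgroup r) (t : ℤ) :
    Qr r (e ^ t).act [] = t * Qr r e.act [] := by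
  induction t using Int.induction_on with
  | zero => simp
  | succ i ih =>
    rw [zpow_add_one, Qr_mul_of_mem_Bgroup (zpow_mem he _), ih]
    push_cast
    ring
  | pred i ih =>
    have h := Qr_mul_of_mem_Bgroup (zpow_mem he (-(i : ℤ) - 1)) e
    rw [← zpow_add_one, sub_add_cancel, ih] at h
    push_cast at h ⊢
    linear_combination -h

lemma exists_genGroupLeft_agreeBelow {g : Portrait} (hg : g ∈ genGroup r) {n : ℕ}
    (hQ : (2 : ℤ_[2]) ^ (n / r + 1) ∣ Qr r g.act []) :
    ∃ ν ∈ genGroupLeft r, Portrait.AgreeBelow n g ν := by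
  have hr : r - 1 < r := Nat.sub_one_lt (NeZero.ne r)
  obtain ⟨ν, hν, t, rfl⟩ := exists_eq_mul_gen_zpow hg
  obtain ⟨hνB, -, hQν⟩ := node_mem_Bgroup_iff.1 (genGroup_le_Bgroup (mem_genGroupLeft.1 hν))
  have hdvd : (2 : ℤ) ^ (n / r) ∣ t := by
    rw [Qr_mul_of_mem_Bgroup hνB, Qr_zpow_of_mem_Bgroup (gen_mem_Bgroup hr), Qr_gen hr,
      if_pos (Nat.sub_one_add_one (NeZero.ne r)),
      show Qr r ν.act [] = 0 by simpa using hQν, zero_add] at hQ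
    refine Int.dvd_of_mul_dvd_mul_right two_ne_zero ?_
    rw [← pow_succ, ← two_pow_dvd_intCast_iff]
    exact_mod_cast hQ
  obtain ⟨s, rfl⟩ := hdvd
  refine ⟨ν, hν, ?_⟩
  have hpow : Portrait.AgreeBelow n (gen r (r - 1) ^ 2 ^ (n / r)) 1 :=
    (gen_pow_two_pow_agreeBelow r (n / r) (r - 1)).mono (by
      have := Nat.div_add_mod n r
      have := Nat.mod_lt n (NeZero.pos r)
      omega)
  have := (Portrait.AgreeBelow.refl n ν).mul (hpow.zpow s)
  rw [one_zpow, mul_one, ← zpow_natCast, ← zpow_mul] at this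
  exact_mod_cast this

lemma exists_genGroup_agreeBelow_nodeHom {n : ℕ}
    (ih : ∀ e ∈ Bgroup r, ∃ g ∈ genGroup r, Portrait.AgreeBelow n e g) {g h : Portrait}
    (hgh : Portrait.nodeHom (g, h) ∈ Bgroup r) :
    ∃ k ∈ genGroup r, Portrait.AgreeBelow (n + 1) (Portrait.nodeHom (g, h)) k := by
  obtain ⟨hg, -, -⟩ := node_mem_Bgroup_iff.1 hgh
  obtain ⟨g', hg', hgg'⟩ := ih g hg
  obtain ⟨h', hh'⟩ := exists_nodeHom_mem_genGroup hg'
  have hquot := mul_mem (inv_mem (genGroup_le_Bgroup hh')) hgh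
  rw [← map_inv, ← map_mul] at hquot
  obtain ⟨-, hB, hQ⟩ := node_mem_Bgroup_iff.1 hquot
  have hQ : Qr r (h'⁻¹ * h).act [] - Qr r (g'⁻¹ * g).act [] = 0 := by simpa using hQ
  have hone : Portrait.AgreeBelow n (g'⁻¹ * g) 1 := by
    simpa using (Portrait.AgreeBelow.refl n g'⁻¹).mul hgg'
  obtain ⟨w, hw, hhw⟩ := ih _ hB
  have hQw : (2 : ℤ_[2]) ^ (n / r + 1) ∣ Qr r w.act [] := by
    have h₁ := two_pow_dvd_Qr_sub_of_agreeBelow hone (Nat.mul_div_le n r)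
    have h₂ := two_pow_dvd_Qr_sub_of_agreeBelow hhw (Nat.mul_div_le n r)
    rw [Qr_one, sub_zero] at h₁
    rw [← sub_eq_zero.1 hQ] at h₁
    exact (dvd_sub_right h₁).1 h₂
  obtain ⟨ν, hν, hwν⟩ := exists_genGroupLeft_agreeBelow hw hQw
  refine ⟨Portrait.nodeHom (g', h') * Portrait.nodeHom (1, ν),
    mul_mem hh' (nodeHom_one_mem_genGroup hν), ?_⟩
  have := (Portrait.AgreeBelow.refl (n + 1) (Portrait.nodeHom (g', h'))).mul
    (hone.node false (hhw.trans hwν))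
  rw [← Portrait.nodeHom_apply (g'⁻¹ * g, _), ← map_mul] at this
  simpa using this

theorem exists_genGroup_agreeBelow (n : ℕ) {e : Portrait} (he : e ∈ Bgroup r) :
    ∃ g ∈ genGroup r, Portrait.AgreeBelow n e g := by
  induction n generalizing e with
  | zero => exact ⟨1, one_mem _, Portrait.agreeBelow_zero _ _⟩
  | succ n ih =>
    have of_nil {d : Portrait} (hd : d ∈ Bgroup r) (hd₀ : d [] = false) :
        ∃ g ∈ genGroup r, Portrait.AgreeBelow (n + 1) d g := by
      rw [← Portrait.node_eta d, hd₀] at hd ⊢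
      exact exists_genGroup_agreeBelow_nodeHom (fun e he => ih he) hd
    cases h₀ : e []
    · exact of_nil he h₀
    · have hgen : gen r 0 ∈ genGroup r := gen_mem_genGroup (NeZero.pos r)
      obtain ⟨g, hg, hag⟩ := of_nil (mul_mem (genGroup_le_Bgroup hgen) he)
        (by simp [Portrait.mul_apply, h₀, gen_nil])
      refine ⟨(gen r 0)⁻¹ * g, mul_mem (inv_mem hgen) hg, ?_⟩
      simpa using (Portrait.AgreeBelow.refl (n + 1) (gen r 0)⁻¹).mul hag

end NeZero

/-! ### Prescribing `P_r` -/

lemma exists_prod_eq_of_triangular {ι V G : Type*} [CommGroup G] {A : ι → Finset V} {v : ι → V}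
    {rank : ι → ℕ} (hv : ∀ i, v i ∈ A i)
    (hA : ∀ i j, i ≠ j → rank j ≤ rank i → v i ∉ A j) (t : ι → G) (N : ℕ) :
    ∃ δ : V → G, (∀ u, (∀ i, v i ≠ u) → δ u = 1) ∧ ∀ i, rank i < N → ∏ u ∈ A i, δ u = t i := by
  induction N with
  | zero => exact ⟨1, fun _ _ => rfl, fun i hi => absurd hi (Nat.not_lt_zero _)⟩
  | succ N ih =>
    obtain ⟨δ, hδ₁, hδ⟩ := ih
    let pivot : {i // rank i = N} → V := fun i => v i
    let β : V → G := Function.extend pivot (fun i => t i / ∏ u ∈ A i, δ u) 1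
    have pivot_injective : pivot.Injective := fun i i' h => Subtype.ext <| by
      by_contra hne
      exact hA i i' hne (i'.2.trans i.2.symm).le ((show v i = v i' from h) ▸ hv i')
    have β_eq_one {i u} (hi : rank i ≤ N) (hu : u ∈ A i) (hui : u ≠ v i) : β u = 1 := by
      refine Function.extend_apply' _ _ _ ?_
      rintro ⟨⟨i', rfl⟩, rfl⟩
      exact hA i' i (fun h => hui (congrArg v h)) hi hu
    refine ⟨fun u => δ u * β u, fun u hu => ?_, fun i hi => ?_⟩
    · have hβ : β u = 1 := Function.extend_apply' _ _ _ fun ⟨i, hi⟩ => hu i hi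
      simp only [hδ₁ u hu, hβ, one_mul]
    rw [Finset.prod_mul_distrib,
      Finset.prod_eq_single_of_mem _ (hv i) fun u hu hui => β_eq_one (by omega) hu hui]
    rcases (Nat.lt_succ_iff.1 hi).lt_or_eq with hlt | heq
    · rw [hδ i hlt, show β (v i) = 1 from Function.extend_apply' _ _ _ ?_, mul_one]
      rintro ⟨⟨i', rfl⟩, h⟩
      exact hA i' i (by rintro rfl; exact hlt.ne rfl) hlt.le ((show v i' = v i from h) ▸ hv i)
    · rw [show β (v i) = _ from pivot_injective.extend_apply _ _ ⟨i, heq⟩, mul_div_cancel]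

/-- The words `ysw` with `w ∈ W(r, j)` and `s ∈ {a, b}`; their marks enter `P_r(e, y)` with
coefficients `± 2 ^ j`. -/
noncomputable def fork (r j : ℕ) (y : List Bool) : Finset (List Bool) :=
  (Wset r j).image (fun w => y ++ [false] ++ w) ∪ (Wset r j).image (fun w => y ++ [true] ++ w)

lemma mem_fork {r j : ℕ} {y v : List Bool} :
    v ∈ fork r j y ↔ ∃ s, ∃ w ∈ Wset r j, y ++ [s] ++ w = v := by
  simp [fork]

@[to_additive]
lemma prod_fork {M : Type*} [CommMonoid M] (r j : ℕ) (y : List Bool) (g : List Bool → M) :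
    ∏ v ∈ fork r j y, g v =
      (∏ w ∈ Wset r j, g (y ++ [false] ++ w)) * ∏ w ∈ Wset r j, g (y ++ [true] ++ w) := by
  rw [fork, Finset.prod_union, Finset.prod_image, Finset.prod_image]
  · exact fun a _ b _ h => List.append_cancel_left h
  · exact fun a _ b _ h => List.append_cancel_left h
  · simp [Finset.disjoint_left]

lemma length_of_mem_fork {r j : ℕ} [NeZero r] {y v : List Bool} (hv : v ∈ fork r (j + 1) y) :
    v.length = y.length + r * (j + 1) := by
  obtain ⟨s, w, hw, rfl⟩ := mem_fork.1 hv
  have hpos : 0 < r * (j + 1) := Nat.mul_pos (NeZero.pos r) j.succ_pos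
  simp only [List.length_append, List.length_singleton, length_of_mem_Wset hw]
  omega

lemma replicate_false_mem_Wset (r j : ℕ) : List.replicate (r * j - 1) false ∈ Wset r j :=
  mem_Wset.2 ⟨List.length_replicate, fun i _ h => by
    simpa using List.eq_of_mem_replicate (List.mem_of_getElem? h)⟩

lemma fork_nonempty (r j : ℕ) (y : List Bool) : (fork r j y).Nonempty :=
  ⟨_, mem_fork.2 ⟨false, _, replicate_false_mem_Wset r j, rfl⟩⟩

lemma append_true_notMem_fork {r i j : ℕ} {x y w : List Bool}
    (hxy : x.length + r * i = y.length + r * j) (hlt : y.length < x.length) :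
    x ++ [true] ++ w ∉ fork r j y := by
  intro hmem
  obtain ⟨s, u, hu, heq⟩ := mem_fork.1 hmem
  have hlen : x.length = y.length + r * (j - i) := by rw [Nat.mul_sub]; omega
  have hx : (x ++ [true] ++ w)[x.length]? = some true := by simp
  rw [← heq, List.getElem?_append_right (by simp; omega)] at hx
  refine (mem_Wset.1 hu).2 (r * (j - i) - 1) ?_ ?_
  · rw [Nat.sub_add_cancel (by omega)]
    exact dvd_mul_right _ _
  · rw [← hx, List.length_append, List.length_singleton, hlen, Nat.add_sub_add_left]

section NeZero

variable {r : ℕ} [NeZero r]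

lemma exists_prod_fork_eq (m : ℕ) {Z : List Bool → Prop}
    (hZ : ∀ y j, y.length + r * (j + 1) = m → (∃ v ∈ fork r (j + 1) y, Z v) →
      ∃ w ∈ Wset r (j + 1), Z (y ++ [true] ++ w)) (t : ℕ → List Bool → ℤˣ) :
    ∃ δ : List Bool → ℤˣ, (∀ v, δ v ≠ 1 → Z v ∧ v.length = m) ∧
      ∀ y j, y.length + r * (j + 1) = m → (∃ v ∈ fork r (j + 1) y, Z v) →
        ∏ v ∈ fork r (j + 1) y, δ v = t j y := by
  let ι := {p : List Bool × ℕ //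
    p.1.length + r * (p.2 + 1) = m ∧ ∃ v ∈ fork r (p.2 + 1) p.1, Z v}
  choose w hw hZw using fun p : ι => hZ p.1.1 p.1.2 p.2.1 p.2.2
  have hmem (p : ι) : p.1.1 ++ [true] ++ w p ∈ fork r (p.1.2 + 1) p.1.1 :=
    mem_fork.2 ⟨true, w p, hw p, rfl⟩
  have htri (p q : ι) (hpq : p ≠ q) (hle : q.1.1.length ≤ p.1.1.length) :
      p.1.1 ++ [true] ++ w p ∉ fork r (q.1.2 + 1) q.1.1 := by
    rcases hle.lt_or_eq with hlt | heq
    · exact append_true_notMem_fork (p.2.1.trans q.2.1.symm) hlt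
    · intro hp
      obtain ⟨s, u, -, hu⟩ := mem_fork.1 hp
      rw [List.append_assoc, List.append_assoc] at hu
      have hfst : q.1.1 = p.1.1 := (List.append_inj hu heq).1
      have hmul : r * (p.1.2 + 1) = r * (q.1.2 + 1) := by
        have := p.2.1.trans q.2.1.symm
        rw [hfst] at this
        omega
      have hsnd := Nat.eq_of_mul_eq_mul_left (NeZero.pos r) hmul
      exact hpq (Subtype.ext (Prod.ext hfst.symm (by omega)))
  obtain ⟨δ, hδ₁, hδ⟩ := exists_prod_eq_of_triangular (rank := fun p : ι => p.1.1.length) hmem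
    htri (fun p => t p.1.2 p.1.1) (m + 1)
  refine ⟨δ, fun v hv => ?_, fun y j hy hex => hδ ⟨(y, j), hy, hex⟩ ?_⟩
  · obtain ⟨p, rfl⟩ := not_forall_not.1 (mt (hδ₁ v) hv)
    exact ⟨hZw p, (length_of_mem_fork (hmem p)).trans p.2.1⟩
  · change y.length < m + 1
    omega

lemma exists_prod_fork_swapSign_eq (m : ℕ) {Z : List Bool → Prop}
    (hZ : ∀ y j, y.length + r * (j + 1) = m → (∃ v ∈ fork r (j + 1) y, Z v) →
      ∃ w ∈ Wset r (j + 1), Z (y ++ [true] ++ w)) (t : ℕ → List Bool → ℤˣ) (e : Portrait) :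
    ∃ e' : Portrait, Portrait.AgreeBelow m e' e ∧ (∀ v, e' v ≠ e v → Z v) ∧
      ∀ y j, y.length + r * (j + 1) = m → (∃ v ∈ fork r (j + 1) y, Z v) →
        ∏ v ∈ fork r (j + 1) y, swapSign (e' v) = t j y := by
  obtain ⟨δ, hδ, ht⟩ := exists_prod_fork_eq m hZ
    fun j y => t j y / ∏ v ∈ fork r (j + 1) y, swapSign (e v)
  have swapSign_decide (ε : ℤˣ) : swapSign (decide (ε = -1)) = ε := by
    rcases Int.units_eq_one_or ε with rfl | rfl <;> rfl
  let e' : Portrait := ⟨fun v => xor (e v) (decide (δ v = -1))⟩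
  have hne (v : List Bool) (hv : e' v ≠ e v) : Z v ∧ v.length = m :=
    hδ v fun h => hv (by simp [e', h])
  refine ⟨e', Portrait.agreeBelow_iff.2 fun v hv => of_not_not fun h => hv.ne (hne v h).2,
    fun v hv => (hne v hv).1, fun y j hy hex => ?_⟩
  simp only [e', swapSign_xor, swapSign_decide]
  rw [Finset.prod_mul_distrib, ht y j hy hex, mul_div_cancel]

lemma exists_agreeBelow_prod_fork_swapSign_eq (m : ℕ) (t : ℕ → List Bool → ℤˣ) (e : Portrait) :
    ∃ e' : Portrait, Portrait.AgreeBelow m e' e ∧ ∀ y j, y.length + r * (j + 1) = m →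
      ∏ v ∈ fork r (j + 1) y, swapSign (e' v) = t j y := by
  obtain ⟨e', he', -, ht⟩ := exists_prod_fork_swapSign_eq (r := r) m (Z := fun _ => True)
    (fun _ j _ _ => ⟨_, replicate_false_mem_Wset r (j + 1), trivial⟩) t e
  refine ⟨e', he', fun y j hy => ht y j hy ?_⟩
  obtain ⟨v, hv⟩ := fork_nonempty r (j + 1) y
  exact ⟨v, hv, trivial⟩

end NeZero

lemma two_pow_dvd_truncP_succ_sub {r j : ℕ} {e : Portrait} {y : List Bool} {a d : ℤ}
    (hd : truncP r j e y - a = 2 ^ (j + 1) * d)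
    (hsign : ∏ v ∈ fork r (j + 1) y, swapSign (e v) = d.negOnePow) :
    2 ^ (j + 1 + 1) ∣ truncP r (j + 1) e y - a := by
  have hprod : ∏ v ∈ fork r (j + 1) y, swapSign (e v) =
      (∑ v ∈ fork r (j + 1) y, ((e v).toNat : ℤ)).negOnePow := by
    rw [← Nat.cast_sum]
    exact Finset.prod_pow_eq_pow_sum _ _ _
  rw [hprod, sum_fork, Int.negOnePow_eq_iff] at hsign
  obtain ⟨b, hb⟩ := hsign
  rw [truncP_succ, pow_succ]
  set T := ∑ w ∈ Wset r (j + 1), ((e (y ++ [true] ++ w)).toNat : ℤ)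
  set S := ∑ w ∈ Wset r (j + 1), ((e (y ++ [false] ++ w)).toNat : ℤ)
  exact ⟨b + d - S, by linear_combination hd + 2 ^ (j + 1) * hb⟩

/-- The sequence `c` consists of integers approximating a 2-adic unit: `c j` prescribes its residue
modulo `2 ^ (j + 1)`. -/
structure IsUnitApprox (c : ℕ → ℤ) : Prop where
  odd : 2 ∣ c 0 - 1
  dvd_sub (j : ℕ) : 2 ^ (j + 1) ∣ c (j + 1) - c j

lemma IsUnitApprox.dvd_truncP_zero_sub {c : ℕ → ℤ} (hc : IsUnitApprox c) (r : ℕ) (e : Portrait)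
    (y : List Bool) : 2 ^ (0 + 1) ∣ truncP r 0 e y - c 0 := by
  simpa using _root_.dvd_sub (two_dvd_truncP_zero_sub_one r e y) hc.odd

lemma exists_isUnitApprox {P : ℤ_[2]} (hP : 2 ∣ P - 1) :
    ∃ c, IsUnitApprox c ∧ ∀ j, (2 : ℤ_[2]) ^ (j + 1) ∣ P - c j := by
  have happr (j : ℕ) : (2 : ℤ_[2]) ^ (j + 1) ∣ P - ((P.appr (j + 1) : ℤ) : ℤ_[2]) := by
    have := PadicInt.appr_spec (j + 1) P
    rw [Ideal.mem_span_singleton] at this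
    exact_mod_cast this
  refine ⟨fun j => P.appr (j + 1), ⟨?_, fun j => ?_⟩, happr⟩
  · rw [← pow_one (2 : ℤ), ← two_pow_dvd_intCast_iff, pow_one]
    convert dvd_sub hP (pow_one (2 : ℤ_[2]) ▸ happr 0) using 1
    push_cast
    ring
  · rw [← two_pow_dvd_intCast_iff]
    convert dvd_sub (happr j) ((pow_dvd_pow 2 (Nat.le_succ (j + 1))).trans (happr (j + 1))) using 1
    push_cast
    ring

lemma Pr_eq_of_forall_dvd {r : ℕ} {e : Portrait} {y : List Bool} {c : ℕ → ℤ} {P : ℤ_[2]}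
    (hP : ∀ j, (2 : ℤ_[2]) ^ (j + 1) ∣ P - c j) (h : ∀ j, 2 ^ (j + 1) ∣ truncP r j e y - c j) :
    Pr r e.act y = P := by
  rw [← sub_eq_zero]
  refine eq_zero_of_forall_two_pow_dvd fun j => (pow_dvd_pow 2 j.le_succ).trans ?_
  convert dvd_sub (dvd_add (two_pow_dvd_Pr_sub_truncP r j e y)
    ((two_pow_dvd_intCast_iff _ _).2 (h j))) (hP j) using 1
  push_cast
  ring

lemma mem_Mgroup_of_forall_dvd {r : ℕ} [NeZero r] {e : Portrait} {c : ℕ → ℤ}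
    (h : ∀ y j, 2 ^ (j + 1) ∣ truncP r j e y - c j) : e ∈ Mgroup r := by
  refine fun y => Pr_eq_of_forall_dvd (c := c) (fun j => ?_) (h y)
  convert dvd_add (two_pow_dvd_Pr_sub_truncP r j e []) ((two_pow_dvd_intCast_iff _ _).2 (h [] j))
    using 1
  push_cast
  ring

section NeZero

variable {r : ℕ} [NeZero r]

lemma exists_forall_two_pow_dvd_truncP (m : ℕ) {Z : List Bool → Prop}
    (hZ : ∀ y j, y.length + r * (j + 1) = m → (∃ v ∈ fork r (j + 1) y, Z v) →
      ∃ w ∈ Wset r (j + 1), Z (y ++ [true] ++ w)) {c : ℕ → ℤ} (hc : IsUnitApprox c)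
    {e : Portrait}
    (he : ∀ y j, y.length + r * j < m → 2 ^ (j + 1) ∣ truncP r j e y - c j) :
    ∃ e' : Portrait, Portrait.AgreeBelow m e' e ∧ (∀ v, e' v ≠ e v → Z v) ∧
      ∀ y j, y.length + r * (j + 1) = m → (∃ v ∈ fork r (j + 1) y, Z v) →
        2 ^ (j + 1 + 1) ∣ truncP r (j + 1) e' y - c (j + 1) := by
  obtain ⟨e', he', hne, ht⟩ := exists_prod_fork_swapSign_eq m hZ
    (fun j y => ((truncP r j e y - c (j + 1)) / 2 ^ (j + 1)).negOnePow) e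
  refine ⟨e', he', hne, fun y j hy hex => two_pow_dvd_truncP_succ_sub ?_ (ht y j hy hex)⟩
  have hlt : y.length + r * j < m := by
    have := NeZero.pos r
    rw [mul_add] at hy
    omega
  rw [truncP_eq_of_agreeBelow he' hlt, Int.mul_ediv_cancel']
  simpa using dvd_sub (he y j hlt) (hc.dvd_sub j)

lemma exists_forall_Pr_eq (e₀ : Portrait) {P : ℤ_[2]} (hP : 2 ∣ P - 1) :
    ∃ e : Portrait, (∀ y, Pr r e.act y = P) ∧ Portrait.AgreeBelow r e e₀ := by
  obtain ⟨c, hc, hPc⟩ := exists_isUnitApprox hP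
  suffices ∃ e : Portrait, ∀ m, Portrait.AgreeBelow (min (m + 1) r) e e₀ ∧
      ∀ y j, y.length + r * j = m → 2 ^ (j + 1) ∣ truncP r j e y - c j by
    obtain ⟨e, he⟩ := this
    exact ⟨e, fun y => Pr_eq_of_forall_dvd hPc fun j => (he _).2 y j rfl,
      (he r).1.mono (le_min r.le_succ le_rfl)⟩
  refine Portrait.exists_forall_of_levelwise _ ?_ ?_
  · rintro m e d hed ⟨h₁, h₂⟩
    refine ⟨(hed.symm.mono (min_le_left _ _)).trans h₁, fun y j hy => ?_⟩
    rw [← truncP_eq_of_agreeBelow hed (by omega)]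
    exact h₂ y j hy
  · intro m e hprev
    have he₀ : Portrait.AgreeBelow (min m r) e e₀ := by
      cases m with
      | zero => exact (Portrait.agreeBelow_zero _ _).mono (min_le_left _ _)
      | succ m => exact (hprev m m.lt_succ_self).1
    by_cases hm : m < r
    · refine ⟨e₀, (min_eq_left hm.le ▸ he₀).symm, .refl _ _, fun y j hy => ?_⟩
      obtain rfl : j = 0 := by
        by_contra hj
        have := Nat.le_mul_of_pos_right r (Nat.pos_of_ne_zero hj)
        omega
      exact hc.dvd_truncP_zero_sub r e₀ y
    obtain ⟨e', hag, -, hdvd⟩ := exists_forall_two_pow_dvd_truncP m (Z := fun _ => True)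
      (fun _ j _ _ => ⟨_, replicate_false_mem_Wset r (j + 1), trivial⟩) hc
      fun y j hlt => (hprev _ hlt).2 y j rfl
    refine ⟨e', hag, ((hag.mono (by omega)).trans (he₀.mono (by omega))), fun y j hy => ?_⟩
    cases j with
    | zero => exact hc.dvd_truncP_zero_sub r e' y
    | succ j =>
      obtain ⟨v, hv⟩ := fork_nonempty r (j + 1) y
      exact hdvd y j hy ⟨v, hv, trivial⟩

end NeZero

/-! ### Dense subgroups of `M_r` -/

lemma exists_sq_eq_of_eight_dvd {P : ℤ_[2]} (hP : 8 ∣ P - 1) :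
    ∃ s : ℤ_[2], s ^ 2 = P ∧ 2 ∣ s - 1 := by
  have norm_le_iff (n : ℕ) (z : ℤ_[2]) : ‖z‖ ≤ (2 : ℝ) ^ (-n : ℤ) ↔ 2 ^ n ∣ z := by
    simpa [Ideal.mem_span_singleton] using PadicInt.norm_le_pow_iff_mem_span_pow z n
  have norm_two : ‖(2 : ℤ_[2])‖ = 2⁻¹ := by simpa using PadicInt.norm_p (p := 2)
  have hP' : ‖P - 1‖ ≤ 8⁻¹ := by
    have := (norm_le_iff 3 (P - 1)).2 (by norm_num [hP])
    norm_num at this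
    linarith
  have hderiv : (X ^ 2 - C P : ℤ_[2][X]).derivative.aeval (1 : ℤ_[2]) = 2 := by
    simp [one_add_one_eq_two]
  have heval : (X ^ 2 - C P : ℤ_[2][X]).aeval (1 : ℤ_[2]) = -(P - 1) := by simp
  obtain ⟨s, hs, hs1, -⟩ := hensels_lemma (F := X ^ 2 - C P) (a := (1 : ℤ_[2])) <| by
    rw [hderiv, heval, norm_neg, norm_two]
    exact hP'.trans_lt (by norm_num)
  refine ⟨s, sub_eq_zero.1 (by simpa using hs), ?_⟩
  rw [hderiv, norm_two] at hs1
  simpa using (norm_le_iff 1 (s - 1)).1 (by simpa using hs1.le)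

lemma exists_monoidHom_ker_eq_of_index_two {G : Type*} [Group G] {H : Subgroup G}
    (hH : H.index = 2) : ∃ χ : G →* ℤˣ, χ.ker = H := by
  classical
  refine ⟨⟨⟨fun x => if x ∈ H then 1 else -1, if_pos (one_mem H)⟩, fun x y => ?_⟩, ?_⟩
  · by_cases hx : x ∈ H <;> by_cases hy : y ∈ H <;>
      simp [hx, hy, Subgroup.mul_mem_iff_of_index_two hH]
  · ext x
    by_cases hx : x ∈ H <;> simp [MonoidHom.mem_ker, hx]

lemma exists_le_index_eq_of_isPGroup {p : ℕ} [hp : Fact p.Prime] {Q : Type*} [Group Q] [Finite Q]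
    (hQ : IsPGroup p Q) {E : Subgroup Q} (hE : E ≠ ⊤) : ∃ H, E ≤ H ∧ H.index = p := by
  obtain ⟨N, hN⟩ := hQ.exists_card_eq
  obtain ⟨m, hm⟩ := (hQ.to_subgroup E).exists_card_eq
  have hmN : m < N := by
    refine lt_of_le_of_ne ?_ fun h => hE (Subgroup.eq_top_of_card_eq _ (by rw [hm, hN, h]))
    have := E.card_subgroup_dvd_card
    rwa [hm, hN, Nat.pow_dvd_pow_iff_le_right hp.out.one_lt] at this
  obtain ⟨H, hcard, hEH⟩ := Sylow.exists_subgroup_card_pow_prime_le p (m := N - 1)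
    (hN ▸ pow_dvd_pow p (Nat.sub_le N 1)) E hm (by omega)
  refine ⟨H, hEH, Nat.eq_of_mul_eq_mul_left (pow_pos hp.out.pos (N - 1)) ?_⟩
  rw [← pow_succ, Nat.sub_add_cancel (by omega), ← hN, ← hcard, H.card_mul_index]

namespace Portrait

lemma AgreeBelow.mul_self_succ {n : ℕ} {e : Portrait} (h : AgreeBelow n e 1) :
    AgreeBelow (n + 1) (e * e) 1 := by
  rw [agreeBelow_iff]
  intro w hw
  rw [mul_apply, h w (Nat.lt_succ_iff.1 hw), act_one, Bool.xor_self, one_apply]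

lemma agreeBelow_pow_two_pow (n : ℕ) (e : Portrait) : AgreeBelow n (e ^ 2 ^ n) 1 := by
  induction n with
  | zero => exact agreeBelow_zero _ _
  | succ n ih => simpa only [pow_succ 2 n, pow_mul, pow_two] using ih.mul_self_succ

lemma isPGroup_quotient_agreeCon (n : ℕ) : IsPGroup 2 (agreeCon n).Quotient := fun q =>
  Con.induction_on q fun e => ⟨n, (agreeCon n).eq.2 (agreeBelow_pow_two_pow n e)⟩

instance (n : ℕ) : Finite (agreeCon n).Quotient := by
  have : Finite {w : List Bool // w.length < n} := (List.finite_length_lt Bool n).to_subtype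
  classical
  refine Finite.of_surjective (α := {w : List Bool // w.length < n} → Bool) (fun m =>
    ((⟨fun w => if hw : w.length < n then m ⟨w, hw⟩ else false⟩ : Portrait) :
      (agreeCon n).Quotient)) fun q => Con.induction_on q fun e => ⟨fun w => e w, ?_⟩
  exact (agreeCon n).eq.2 (agreeBelow_iff.2 fun w hw => dif_pos hw)

end Portrait

open Portrait

lemma monoidHom_eq_one_of_levelSign_eq_one {r : ℕ} (χ : genGroup r →* ℤˣ) {g : genGroup r}
    (hg : ∀ i < r, levelSign i g = 1) : χ g = 1 := by
  classical
  let gen' : Fin r → genGroup r := fun i => ⟨gen r i, gen_mem_genGroup i.2⟩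
  let ψ : genGroup r →* ℤˣ := ∏ i : Fin r,
    if χ (gen' i) = 1 then 1 else (levelSign i).comp (genGroup r).subtype
  suffices χ = ψ by
    rw [this, MonoidHom.finsetProd_apply]
    refine Finset.prod_eq_one fun i _ => ?_
    split_ifs
    · rfl
    · exact hg i i.2
  have hdense : Subgroup.closure (((↑) : genGroup r → Portrait) ⁻¹' (gen r '' Set.Iio r)) = ⊤ :=
    Subgroup.closure_closure_coe_preimage
  refine MonoidHom.eq_of_eqOn_dense hdense ?_
  rintro ⟨_, hmem⟩ ⟨i, hi, rfl⟩
  rw [MonoidHom.finsetProd_apply, Finset.prod_eq_single ⟨i, hi⟩]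
  · split_ifs with h
    · exact h
    · refine ((Int.units_eq_one_or _).resolve_left h).trans ?_
      simp [levelSign_gen (Set.mem_Iio.1 hi)]
  · intro j _ hj
    split_ifs
    · rfl
    · simp [levelSign_gen j.2, Ne.symm (Fin.val_ne_of_ne hj)]
  · simp

section NeZero

variable {r : ℕ} [NeZero r]

/-- Up to squares, an element of `M_r` on which `P_r` is `1` modulo `8` lies in `B_r`. -/
lemma exists_eq_mul_self_mul_of_eight_dvd {τ : Mgroup r}
    (hP : 8 ∣ Pr r (τ : Portrait).act [] - 1) :
    ∃ t d : Mgroup r, (d : Portrait) ∈ Bgroup r ∧ τ = t * t * d := by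
  obtain ⟨s, hs, hs1⟩ := exists_sq_eq_of_eight_dvd hP
  obtain ⟨t, ht, -⟩ := exists_forall_Pr_eq (r := r) 1 hs1
  have htt (y : List Bool) : Pr r (t * t).act y = s ^ 2 := by rw [Pr_mul ht, ht, sq]
  refine ⟨⟨t, mem_Mgroup_of_forall ht⟩, (⟨t, mem_Mgroup_of_forall ht⟩ ^ 2)⁻¹ * τ, fun y => ?_,
    by rw [← sq, mul_inv_cancel_left]⟩
  have hne : s ^ 2 ≠ 0 := left_ne_zero_of_mul_eq_one (Pr_mul_Pr_inv htt [])
  refine mul_left_cancel₀ hne ?_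
  rw [← Pr_mul htt, mul_one, hs, ← τ.2 y]
  simp [sq, mul_assoc]

lemma monoidHom_Mgroup_eq_one {n : ℕ} {χ : Mgroup r →* ℤˣ}
    (hχ : ∀ τ : Mgroup r, AgreeBelow n τ 1 → χ τ = 1) {τ : Mgroup r}
    (hsign : ∀ i < r, levelSign i τ = 1) (hP : 8 ∣ Pr r (τ : Portrait).act [] - 1) :
    χ τ = 1 := by
  obtain ⟨t, d, hd, rfl⟩ := exists_eq_mul_self_mul_of_eight_dvd hP
  obtain ⟨g, hg, hdg⟩ := exists_genGroup_agreeBelow (max n r) hd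
  let g' : Mgroup r := ⟨g, Bgroup_le_Mgroup (genGroup_le_Bgroup hg)⟩
  have hχg : χ g' = 1 := by
    refine monoidHom_eq_one_of_levelSign_eq_one
      (χ.comp (Subgroup.inclusion (genGroup_le_Bgroup.trans Bgroup_le_Mgroup))) (g := ⟨g, hg⟩)
      fun i hi => ?_
    rw [← levelSign_eq_of_agreeBelow (lt_max_of_lt_right hi) hdg, ← hsign i hi]
    simp
  have hχd : χ (d * g'⁻¹) = 1 :=
    hχ _ (by simpa using (hdg.mono (le_max_left n r)).mul (.refl n g⁻¹))
  calc χ (t * t * d) = χ t * χ t * χ (d * g'⁻¹ * g') := by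
        rw [inv_mul_cancel_right, map_mul, map_mul]
    _ = 1 := by rw [Int.units_mul_self, one_mul, map_mul, hχd, hχg, one_mul]

theorem exists_agreeBelow_of_eight_dvd (E : Subgroup (Mgroup r))
    (hE : ∀ τ : Mgroup r, ∃ e ∈ E, (∀ i < r, levelSign i e = levelSign i τ) ∧
      8 ∣ Pr r (e : Portrait).act [] - Pr r (τ : Portrait).act []) (n : ℕ) (τ : Mgroup r) :
    ∃ e ∈ E, AgreeBelow n e τ := by
  let f := ((agreeCon n).mk'.comp (Mgroup r).subtype).rangeRestrict
  have hf (e d : Mgroup r) : f e = f d ↔ AgreeBelow n e d :=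
    Subtype.ext_iff.trans (agreeCon n).eq
  suffices E.map f = ⊤ by
    obtain ⟨e, he, heq⟩ : f τ ∈ E.map f := this ▸ Subgroup.mem_top _
    exact ⟨e, he, (hf e τ).1 heq⟩
  by_contra hne
  obtain ⟨H, hEH, hH⟩ := exists_le_index_eq_of_isPGroup
    ((isPGroup_quotient_agreeCon n).to_subgroup _) hne
  obtain ⟨χ, rfl⟩ := exists_monoidHom_ker_eq_of_index_two hH
  have hχf (τ : Mgroup r) : χ (f τ) = 1 := by
    obtain ⟨e, he, hsign, hP⟩ := hE τ
    have hPinv := Pr_mul_Pr_inv e.2 []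
    have hχ : χ.comp f (e⁻¹ * τ) = 1 := by
      refine monoidHom_Mgroup_eq_one (n := n) (fun σ hσ => ?_) (fun i hi => ?_) ?_
      · rw [MonoidHom.comp_apply, (hf σ 1).2 hσ, map_one, map_one]
      · simp [hsign i hi]
      · have hmul : Pr r ((e⁻¹ * τ : Mgroup r) : Portrait).act [] =
            Pr r (e⁻¹ : Portrait).act [] * Pr r (τ : Portrait).act [] := Pr_mul (e⁻¹).2 _ _
        rw [hmul, ← hPinv, mul_comm, ← sub_mul]
        exact (dvd_sub_comm.1 hP).mul_right _
    have hχe : χ (f e) = 1 := hEH ⟨e, he, rfl⟩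
    simpa [hχe] using hχ
  have : χ.ker = ⊤ := by
    rw [eq_top_iff]
    rintro x -
    obtain ⟨τ, rfl⟩ := MonoidHom.rangeRestrict_surjective _ x
    exact hχf τ
  rw [this, Subgroup.index_top] at hH
  norm_num at hH

end NeZero

/-! ### Labelings of the preimage tree -/

section Labeling

variable {L : Type*} [Field L] {c x₀ : L} {ℓ : List Bool → L} {r : ℕ}

/-- A labeling of the tree by the iterated preimages of `x₀` under `z ↦ z ^ 2 + c`. -/
structure IsLabeling (c x₀ : L) (ℓ : List Bool → L) : Prop where
  root : ℓ [] = x₀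
  sq_add (w : List Bool) (s : Bool) : ℓ (w ++ [s]) ^ 2 + c = ℓ w
  neg (w : List Bool) : ℓ (w ++ [false]) = -ℓ (w ++ [true])

lemma isLabeling_iff : IsLabeling c x₀ ℓ ↔ ℓ [] = x₀ ∧
    (∀ w s, ℓ (w ++ [s]) ^ 2 + c = ℓ w) ∧ ∀ w, ℓ (w ++ [false]) = -ℓ (w ++ [true]) :=
  ⟨fun h => ⟨h.root, h.sq_add, h.neg⟩, fun ⟨h₁, h₂, h₃⟩ => ⟨h₁, h₂, h₃⟩⟩

namespace IsLabeling

lemma sq (hℓ : IsLabeling c x₀ ℓ) (w : List Bool) (s : Bool) : ℓ (w ++ [s]) ^ 2 = ℓ w - c :=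
  eq_sub_of_add_eq (hℓ.sq_add w s)

lemma snoc_eq_zero_iff (hℓ : IsLabeling c x₀ ℓ) (w : List Bool) (s : Bool) :
    ℓ (w ++ [s]) = 0 ↔ ℓ w = c := by
  rw [← sq_eq_zero_iff, hℓ.sq, sub_eq_zero]

lemma snoc (hℓ : IsLabeling c x₀ ℓ) (w : List Bool) (s : Bool) :
    ℓ (w ++ [s]) = swapSign s • ℓ (w ++ [false]) := by
  cases s
  · simp
  · simp [hℓ.neg]

lemma prod_words_sub (hℓ : IsLabeling c x₀ ℓ) (t : L) (n : ℕ) (x : List Bool) :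
    ∏ u ∈ words n, (t - ℓ (x ++ u)) = (fun z : L => z ^ 2 + c)^[n] t - ℓ x := by
  induction n generalizing x with
  | zero => simp
  | succ n ih =>
    have h₀ := ih (x ++ [false])
    have h₁ := ih (x ++ [true])
    simp only [List.append_assoc, List.singleton_append] at h₀ h₁
    rw [prod_words_succ, h₀, h₁, Function.iterate_succ_apply', hℓ.neg]
    linear_combination -hℓ.sq_add x true

lemma comp_act (hℓ : IsLabeling c x₀ ℓ) (e : Portrait) : IsLabeling c x₀ fun w => ℓ (e.act w) where
  root := hℓ.root
  sq_add w s := by rw [Portrait.act_snoc, hℓ.sq_add]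
  neg w := by
    rw [Portrait.act_snoc, Portrait.act_snoc, hℓ.snoc, hℓ.snoc _ (xor true _), swapSign_xor,
      swapSign_xor]
    simp

end IsLabeling

/-- The products `S_j(x) = ∏_{w ∈ W(r, j)} ℓ(xwa)`, in recursive form starting from `S_0 = ℓ`.
When `0` has period `r`, they are iterated square roots of `ℓ(x)` up to sign. -/
noncomputable def labelProd (r : ℕ) (ℓ : List Bool → L) : ℕ → List Bool → L
  | 0, x => ℓ x
  | j + 1, x => ∏ u ∈ words (r - 1), labelProd r ℓ j (x ++ u ++ [false])

@[simp] lemma labelProd_zero (x : List Bool) : labelProd r ℓ 0 x = ℓ x := rfl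

lemma labelProd_succ [NeZero r] (j : ℕ) (x : List Bool) :
    labelProd r ℓ (j + 1) x = ∏ w ∈ Wset r (j + 1), ℓ (x ++ w ++ [false]) := by
  induction j generalizing x with
  | zero => rw [Wset_one]; rfl
  | succ j ih =>
    rw [prod_Wset_add_two]
    refine Finset.prod_congr rfl fun u _ => ?_
    rw [ih]
    simp

lemma labelProd_congr [NeZero r] {ℓ' : List Bool → L} {j : ℕ} {x : List Bool}
    (h : ∀ w, w.length = x.length + r * j → ℓ w = ℓ' w) :
    labelProd r ℓ j x = labelProd r ℓ' j x := by
  cases j with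
  | zero => exact h x rfl
  | succ j =>
    have hpos : 0 < r * (j + 1) := Nat.mul_pos (NeZero.pos r) j.succ_pos
    rw [labelProd_succ, labelProd_succ]
    refine Finset.prod_congr rfl fun w hw => h _ ?_
    simp [length_of_mem_Wset hw]
    omega

lemma labelProd_comp_act_succ [NeZero r] (hℓ : IsLabeling c x₀ ℓ) (e : Portrait) (j : ℕ)
    (x : List Bool) :
    labelProd r (fun w => ℓ (e.act w)) (j + 1) x = (∏ w ∈ Wset r (j + 1), swapSign (e (x ++ w))) •
      ∏ w ∈ Wset r (j + 1), ℓ (e.act (x ++ w) ++ [false]) := by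
  rw [labelProd_succ, ← Finset.prod_smul]
  refine Finset.prod_congr rfl fun w _ => ?_
  rw [Portrait.act_snoc, hℓ.snoc, Bool.false_xor]

lemma exists_forall_labelProd_succ_sq [NeZero r] (hper : (fun z : L => z ^ 2 + c)^[r] 0 = 0)
    (j : ℕ) : ∃ ε : ℤˣ, ∀ {x₀ : L} {ℓ : List Bool → L}, IsLabeling c x₀ ℓ →
      ∀ x, labelProd r ℓ (j + 1) x ^ 2 = ε • labelProd r ℓ j x := by
  have hper' : (fun z : L => z ^ 2 + c)^[r - 1] c = 0 := by
    rw [← Nat.sub_add_cancel (NeZero.one_le (n := r)), Function.iterate_succ_apply] at hper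
    simpa using hper
  induction j with
  | zero =>
    refine ⟨(-1) ^ 2 ^ (r - 1) * -1, fun {x₀ ℓ} hℓ x => ?_⟩
    calc labelProd r ℓ (0 + 1) x ^ 2 = ∏ u ∈ words (r - 1), (-1 : ℤˣ) • (c - ℓ (x ++ u)) := by
          simp only [labelProd, ← Finset.prod_pow, hℓ.sq, Units.neg_smul, one_smul, neg_sub]
      _ = ((-1) ^ 2 ^ (r - 1) * -1 : ℤˣ) • labelProd r ℓ 0 x := by
          rw [Finset.prod_smul, hℓ.prod_words_sub, hper', Finset.prod_const, card_words, mul_smul,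
            zero_sub, Units.neg_smul, one_smul, labelProd_zero]
  | succ j ih =>
    obtain ⟨ε, hε⟩ := ih
    refine ⟨ε ^ 2 ^ (r - 1), fun hℓ x => ?_⟩
    rw [labelProd, ← Finset.prod_pow]
    simp only [hε hℓ]
    rw [Finset.prod_smul, Finset.prod_const, card_words, labelProd]

lemma labelProd_snoc_eq_zero_iff [NeZero r] (hper : (fun z : L => z ^ 2 + c)^[r] 0 = 0)
    (hℓ : IsLabeling c x₀ ℓ) (j : ℕ) (y : List Bool) (s : Bool) :
    labelProd r ℓ j (y ++ [s]) = 0 ↔ ℓ y = c := by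
  rw [← hℓ.snoc_eq_zero_iff y s]
  induction j with
  | zero => rfl
  | succ j ih =>
    obtain ⟨ε, hε⟩ := exists_forall_labelProd_succ_sq hper j
    rw [← ih, ← sq_eq_zero_iff, hε hℓ, smul_eq_zero_iff_eq]

lemma exists_mem_Wset_label_eq_iff [NeZero r] (hper : (fun z : L => z ^ 2 + c)^[r] 0 = 0)
    (hℓ : IsLabeling c x₀ ℓ) (j : ℕ) (y : List Bool) (s : Bool) :
    (∃ w ∈ Wset r (j + 1), ℓ (y ++ [s] ++ w) = c) ↔ ℓ y = c := by
  simp_rw [← labelProd_snoc_eq_zero_iff hper hℓ (j + 1) y s, labelProd_succ,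
    Finset.prod_eq_zero_iff, hℓ.snoc_eq_zero_iff]

/-- A compatible system of roots of unity, `ζ j` being primitive of order `2 ^ (j + 1)`. -/
structure IsTwoPowRootTower (ζ : ℕ → L) : Prop where
  zero : ζ 0 = -1
  succ_sq (j : ℕ) : ζ (j + 1) ^ 2 = ζ j

namespace IsTwoPowRootTower

variable {ζ : ℕ → L}

lemma pow_two_pow (hζ : IsTwoPowRootTower ζ) (j : ℕ) : ζ j ^ 2 ^ j = -1 := by
  induction j with
  | zero => rw [pow_zero, pow_one, hζ.zero]
  | succ j ih => rw [pow_succ', pow_mul, hζ.succ_sq, ih]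

lemma ne_zero (hζ : IsTwoPowRootTower ζ) (j : ℕ) : ζ j ≠ 0 := fun h => by
  simpa [h] using hζ.pow_two_pow j

lemma isPrimitiveRoot (hζ : IsTwoPowRootTower ζ) (h2 : (2 : L) ≠ 0) (j : ℕ) :
    IsPrimitiveRoot (ζ j) (2 ^ (j + 1)) := by
  have hne : ζ j ^ 2 ^ j ≠ 1 := by
    rw [hζ.pow_two_pow]
    exact fun h => h2 (by linear_combination -h)
  have hone : ζ j ^ 2 ^ (j + 1) = 1 := by rw [pow_succ, pow_mul, hζ.pow_two_pow, neg_one_sq]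
  exact orderOf_eq_prime_pow hne hone ▸ IsPrimitiveRoot.orderOf (ζ j)

lemma zpow_eq_zpow_iff (hζ : IsTwoPowRootTower ζ) (h2 : (2 : L) ≠ 0) (j : ℕ) (a b : ℤ) :
    ζ j ^ a = ζ j ^ b ↔ 2 ^ (j + 1) ∣ a - b := by
  have := (hζ.isPrimitiveRoot h2 j).zpow_eq_one_iff_dvd (a - b)
  push_cast at this
  rw [← this, zpow_sub₀ (hζ.ne_zero j), div_eq_one_iff_eq (zpow_ne_zero _ (hζ.ne_zero j))]

end IsTwoPowRootTower

/-- A labeling is coherent with a tower of roots of unity if at every node the square roots `S_j` of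
the labels of the two children differ by the root of unity `ζ j`. Galois automorphisms act on such
labelings by elements of `M_r`. -/
def IsCoherent (r : ℕ) (ζ : ℕ → L) (ℓ : List Bool → L) : Prop :=
  ∀ y j, labelProd r ℓ j (y ++ [true]) = ζ j * labelProd r ℓ j (y ++ [false])

lemma IsCoherent.snoc {ζ : ℕ → L} (hcoh : IsCoherent r ζ ℓ) (y : List Bool) (j : ℕ) (s : Bool) :
    labelProd r ℓ j (y ++ [s]) = ζ j ^ s.toNat * labelProd r ℓ j (y ++ [false]) := by
  cases s
  · simp
  · simp [hcoh y j]

lemma exists_agreeBelow_coherent_level [NeZero r] (hper : (fun z : L => z ^ 2 + c)^[r] 0 = 0)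
    (hℓ : IsLabeling c x₀ ℓ) {ζ : ℕ → L} (hζ : IsTwoPowRootTower ζ) {m : ℕ} {e : Portrait}
    (he : ∀ y j, y.length + r * j < m → labelProd r (fun w => ℓ (e.act w)) j (y ++ [true]) =
      ζ j * labelProd r (fun w => ℓ (e.act w)) j (y ++ [false])) :
    ∃ d : Portrait, Portrait.AgreeBelow m d e ∧ ∀ y j, y.length + r * (j + 1) = m →
      labelProd r (fun w => ℓ (d.act w)) (j + 1) (y ++ [true]) =
        ζ (j + 1) * labelProd r (fun w => ℓ (d.act w)) (j + 1) (y ++ [false]) := by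
  classical
  let R (j : ℕ) (x : List Bool) : L := ∏ w ∈ Wset r (j + 1), ℓ (e.act (x ++ w) ++ [false])
  let t (j : ℕ) (y : List Bool) : ℤˣ :=
    if R j (y ++ [true]) = ζ (j + 1) * R j (y ++ [false]) then 1 else -1
  have hR (j : ℕ) (y : List Bool) (hy : y.length + r * (j + 1) = m) :
      R j (y ++ [true]) = t j y • (ζ (j + 1) * R j (y ++ [false])) := by
    obtain ⟨ε, hε⟩ := exists_forall_labelProd_succ_sq hper j
    have hRsq (x : List Bool) : R j x ^ 2 = ε • labelProd r (fun w => ℓ (e.act w)) j x := by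
      rw [← hε (hℓ.comp_act e), labelProd_comp_act_succ hℓ, _root_.smul_pow, Int.units_sq, one_smul]
    have hsq : R j (y ++ [true]) ^ 2 = (ζ (j + 1) * R j (y ++ [false])) ^ 2 := by
      have := NeZero.pos r
      rw [mul_pow, hRsq, hRsq, hζ.succ_sq, he y j (by rw [mul_add] at hy; omega), mul_smul_comm]
    by_cases h : R j (y ++ [true]) = ζ (j + 1) * R j (y ++ [false])
    · simp only [t, if_pos h, one_smul, h]
    · simp only [t, if_neg h, Units.neg_smul, one_smul]
      exact (sq_eq_sq_iff_eq_or_eq_neg.1 hsq).resolve_left h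
  obtain ⟨d, hd, ht⟩ := exists_agreeBelow_prod_fork_swapSign_eq (r := r) m t e
  refine ⟨d, hd, fun y j hy => ?_⟩
  have hdR (s : Bool) : labelProd r (fun w => ℓ (d.act w)) (j + 1) (y ++ [s]) =
      (∏ w ∈ Wset r (j + 1), swapSign (d (y ++ [s] ++ w))) • R j (y ++ [s]) := by
    rw [labelProd_comp_act_succ hℓ]
    congr 1
    refine Finset.prod_congr rfl fun w hw => ?_
    rw [hd _ (length_of_mem_fork (mem_fork.2 ⟨s, w, hw, rfl⟩) |>.trans hy).le]
  have hsign := ht y j hy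
  rw [prod_fork] at hsign
  rw [hdR, hdR, hR j y hy, ← hsign, smul_smul, mul_comm, mul_assoc, Int.units_mul_self, mul_one,
    mul_smul_comm]

lemma exists_isCoherent [NeZero r] (hper : (fun z : L => z ^ 2 + c)^[r] 0 = 0)
    (hℓ : IsLabeling c x₀ ℓ) {ζ : ℕ → L} (hζ : IsTwoPowRootTower ζ) :
    ∃ ℓ', IsLabeling c x₀ ℓ' ∧ IsCoherent r ζ ℓ' := by
  suffices h : ∃ e : Portrait, ∀ m y j, y.length + r * j = m →
      labelProd r (fun w => ℓ (e.act w)) j (y ++ [true]) =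
        ζ j * labelProd r (fun w => ℓ (e.act w)) j (y ++ [false]) by
    obtain ⟨e, he⟩ := h
    exact ⟨_, hℓ.comp_act e, fun y j => he _ y j rfl⟩
  refine Portrait.exists_forall_of_levelwise _ (fun m e d hed he y j hy => ?_) fun m e he => ?_
  · have hcongr (s : Bool) : labelProd r (fun w => ℓ (d.act w)) j (y ++ [s]) =
        labelProd r (fun w => ℓ (e.act w)) j (y ++ [s]) :=
      labelProd_congr fun w hw => by
        rw [List.length_append, List.length_singleton] at hw
        rw [hed w (by omega)]
    rw [hcongr, hcongr, he y j hy]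
  · obtain ⟨d, hde, hd⟩ := exists_agreeBelow_coherent_level hper hℓ hζ fun y j hlt =>
      he _ hlt y j rfl
    refine ⟨d, hde, fun y j hy => ?_⟩
    cases j with
    | zero => simpa [hζ.zero] using neg_eq_iff_eq_neg.1 ((hℓ.comp_act d).neg y).symm
    | succ j => exact hd y j hy

lemma IsLabeling.map_sq {F : Type*} [FunLike F L L] [RingHomClass F L L] {σ : F}
    (hℓ : IsLabeling c x₀ ℓ) (hσc : σ c = c) {v v' : List Bool} (hv : σ (ℓ v) = ℓ v') (s t : Bool) :
    σ (ℓ (v ++ [s])) ^ 2 = ℓ (v' ++ [t]) ^ 2 := by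
  rw [← map_pow, hℓ.sq, hℓ.sq, map_sub, hσc, hv]

lemma IsLabeling.act_eq_of_agreeBelow (hℓ : IsLabeling c x₀ ℓ) {m : ℕ} {d e : Portrait}
    (hde : Portrait.AgreeBelow m d e) (hne : ∀ v, d v ≠ e v → v.length = m → ℓ (e.act v) = c)
    {w : List Bool} (hw : w.length ≤ m + 1) : ℓ (d.act w) = ℓ (e.act w) := by
  rcases Nat.le_succ_iff.1 hw with hle | heq
  · rw [hde w hle]
  · obtain ⟨v, s, rfl⟩ :=
      (List.eq_nil_or_concat' w).resolve_left (List.ne_nil_of_length_eq_add_one heq)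
    have hv : v.length = m := by simpa using heq
    rw [Portrait.act_snoc, Portrait.act_snoc, hde v hv.le]
    by_cases h : d v = e v
    · rw [h]
    · rw [(hℓ.snoc_eq_zero_iff _ _).2 (hne v h hv), (hℓ.snoc_eq_zero_iff _ _).2 (hne v h hv)]

end Labeling

/-! ### The Galois action on coherent labelings -/

section GaloisAction

lemma prod_zpow_eq_zpow_sum {G₀ ι : Type*} [CommGroupWithZero G₀] {a : G₀} (ha : a ≠ 0)
    (s : Finset ι) (f : ι → ℤ) : ∏ i ∈ s, a ^ f i = a ^ ∑ i ∈ s, f i := by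
  induction s using Finset.cons_induction with
  | empty => simp
  | cons i s hi ih => rw [Finset.prod_cons, Finset.sum_cons, ih, zpow_add₀ ha]

variable {L : Type*} [Field L] {c x₀ : L} {ℓ : List Bool → L} {r : ℕ} {ζ : ℕ → L}
  {F : Type*} [FunLike F L L] [RingHomClass F L L] {σ : F} {e : Portrait} {N : ℕ}

lemma map_labelProd [NeZero r] (hζ : IsTwoPowRootTower ζ) (hcoh : IsCoherent r ζ ℓ)
    (he : ∀ w : List Bool, w.length ≤ N → σ (ℓ w) = ℓ (e.act w)) {j : ℕ} {x : List Bool}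
    (hx : x.length + r * j ≤ N) :
    σ (labelProd r ℓ j x) = ζ j ^ truncQ r j e x * labelProd r ℓ j (e.act x) := by
  have hr := NeZero.pos r
  induction j generalizing x with
  | zero => simpa using he x hx
  | succ j ih =>
    let a (u : List Bool) : ℤ := (e (x ++ u)).toNat + truncQ r j e (x ++ u ++ [false])
    have hchild (u : List Bool) (hu : u ∈ words (r - 1)) :
        σ (labelProd r ℓ j (x ++ u ++ [false])) =
          ζ j ^ a u * labelProd r ℓ j (e.act (x ++ u) ++ [false]) := by
      rw [mem_words] at hu
      have hlen : (x ++ u ++ [false]).length + r * j ≤ N := by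
        rw [List.length_append, List.length_append, List.length_singleton, hu]
        rw [mul_add_one] at hx
        omega
      rw [ih hlen, Portrait.act_snoc, hcoh.snoc,
        zpow_add₀ (hζ.ne_zero j), zpow_natCast, Bool.false_xor, mul_assoc, mul_left_comm]
    calc σ (labelProd r ℓ (j + 1) x)
        = ∏ u ∈ words (r - 1), ζ j ^ a u * labelProd r ℓ j (e.act (x ++ u) ++ [false]) := by
          rw [labelProd, map_prod, Finset.prod_congr rfl hchild]
      _ = ζ j ^ (∑ u ∈ words (r - 1), a u) * labelProd r ℓ (j + 1) (e.act x) := by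
          rw [Finset.prod_mul_distrib, prod_zpow_eq_zpow_sum (hζ.ne_zero j), labelProd,
            prod_words_act (r - 1) e x fun v => labelProd r ℓ j (v ++ [false])]
      _ = ζ (j + 1) ^ truncQ r (j + 1) e x * labelProd r ℓ (j + 1) (e.act x) := by
          rw [truncQ_succ, zpow_mul, zpow_ofNat, hζ.succ_sq]

lemma map_rootTower [NeZero r] (hper : (fun z : L => z ^ 2 + c)^[r] 0 = 0)
    (hℓ : IsLabeling c x₀ ℓ) (hζ : IsTwoPowRootTower ζ) (hcoh : IsCoherent r ζ ℓ) (hσc : σ c = c)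
    (he : ∀ w : List Bool, w.length ≤ N → σ (ℓ w) = ℓ (e.act w)) {j : ℕ} {y : List Bool}
    (hy : y.length + r * j + 1 ≤ N) (hyc : ℓ y ≠ c) : σ (ζ j) = ζ j ^ truncP r j e y := by
  have hmap (s : Bool) : σ (labelProd r ℓ j (y ++ [s])) = ζ j ^ truncQ r j e (y ++ [s]) *
      (ζ j ^ (xor s (e y)).toNat * labelProd r ℓ j (e.act y ++ [false])) := by
    rw [map_labelProd hζ hcoh he (by simp; omega), Portrait.act_snoc, hcoh.snoc]
  have htrue := hmap true
  rw [hcoh, map_mul, hmap false] at htrue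
  have hne : labelProd r ℓ j (e.act y ++ [false]) ≠ 0 := by
    rw [Ne, labelProd_snoc_eq_zero_iff hper hℓ, ← he y (by omega), ← hσc]
    exact fun h => hyc (RingHomClass.toRingHom σ |>.injective h)
  have hz := hζ.ne_zero j
  have hexp : truncP r j e y + truncQ r j e (y ++ [false]) + (xor false (e y)).toNat =
      truncQ r j e (y ++ [true]) + (xor true (e y)).toNat := by
    unfold truncP
    cases e y <;> simp [add_comm]
  have hpow := congrArg (ζ j ^ ·) hexp
  simp only [zpow_add₀ hz, zpow_natCast] at hpow
  refine mul_right_cancel₀ (mul_ne_zero (mul_ne_zero (zpow_ne_zero (truncQ r j e (y ++ [false])) hz)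
    (pow_ne_zero (xor false (e y)).toNat hz)) hne) ?_
  linear_combination htrue - labelProd r ℓ j (e.act y ++ [false]) * hpow

variable (σ) in
lemma exists_isUnitApprox_map (hζ : IsTwoPowRootTower ζ) (h2 : (2 : L) ≠ 0) :
    ∃ a : ℕ → ℤ, IsUnitApprox a ∧ ∀ j, σ (ζ j) = ζ j ^ a j := by
  have hpow (j : ℕ) : ∃ a : ℤ, σ (ζ j) = ζ j ^ a := by
    have hone : σ (ζ j) ^ 2 ^ (j + 1) = 1 := by
      rw [← map_pow, (hζ.isPrimitiveRoot h2 j).pow_eq_one, map_one]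
    obtain ⟨i, -, hi⟩ := (hζ.isPrimitiveRoot h2 j).eq_pow_of_pow_eq_one hone
    exact ⟨i, by rw [zpow_natCast, hi]⟩
  choose a ha using hpow
  refine ⟨a, ⟨?_, fun j => ?_⟩, ha⟩
  · have h := hζ.zpow_eq_zpow_iff h2 0 (a 0) 1
    rw [zero_add, pow_one, ← ha 0, hζ.zero] at h
    simpa using h
  · rw [← hζ.zpow_eq_zpow_iff h2, ← ha j, ← hζ.succ_sq j, map_pow, ha, ← zpow_natCast,
      ← zpow_natCast, ← zpow_mul, ← zpow_mul, mul_comm]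

lemma exists_agreeBelow_map_label_eq (hℓ : IsLabeling c x₀ ℓ) (hσc : σ c = c)
    (he : ∀ w : List Bool, w.length ≤ N → σ (ℓ w) = ℓ (e.act w)) :
    ∃ d : Portrait, Portrait.AgreeBelow N d e ∧
      ∀ w : List Bool, w.length ≤ N + 1 → σ (ℓ w) = ℓ (d.act w) := by
  classical
  have hsign (v : List Bool) : ∃ s, v.length ≤ N →
      σ (ℓ (v ++ [false])) = swapSign s • ℓ (e.act v ++ [false]) := by
    by_cases hv : v.length ≤ N
    · rcases sq_eq_sq_iff_eq_or_eq_neg.1 (hℓ.map_sq hσc (he v hv) false false) with h | h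
      · exact ⟨false, fun _ => by simpa using h⟩
      · exact ⟨true, fun _ => by simpa using h⟩
    · exact ⟨false, fun h => absurd h hv⟩
  choose s hs using hsign
  let d : Portrait := ⟨fun v => if v.length < N then e v else s v⟩
  have hd : Portrait.AgreeBelow N d e := Portrait.agreeBelow_iff.2 fun v hv => if_pos hv
  refine ⟨d, hd, fun w hw => ?_⟩
  rcases Nat.le_succ_iff.1 hw with hle | heq
  · rw [hd w hle, he w hle]
  · obtain ⟨v, t, rfl⟩ := 
      (List.eq_nil_or_concat' w).resolve_left (List.ne_nil_of_length_eq_add_one heq)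
    have hv : v.length = N := by simpa using heq
    have hdv : d v = s v := if_neg hv.not_lt
    rw [Portrait.act_snoc, hd v hv.le, hℓ.snoc v, hℓ.snoc _ (xor t _), hdv, swapSign_xor, mul_smul,
      ← hs v hv.le, Units.smul_def, map_zsmul, Units.smul_def]

lemma exists_agreeBelow_lift_level [NeZero r] (hper : (fun z : L => z ^ 2 + c)^[r] 0 = 0)
    (hℓ : IsLabeling c x₀ ℓ) (hζ : IsTwoPowRootTower ζ) (hcoh : IsCoherent r ζ ℓ)
    (h2 : (2 : L) ≠ 0) (hσc : σ c = c) {a : ℕ → ℤ} (ha : IsUnitApprox a)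
    (hσζ : ∀ j, σ (ζ j) = ζ j ^ a j)
    (he : ∀ w : List Bool, w.length ≤ N → σ (ℓ w) = ℓ (e.act w))
    (hP : ∀ y j, y.length + r * j < N → 2 ^ (j + 1) ∣ truncP r j e y - a j) :
    ∃ d : Portrait, Portrait.AgreeBelow N d e ∧
      (∀ w : List Bool, w.length ≤ N + 1 → σ (ℓ w) = ℓ (d.act w)) ∧
      ∀ y j, y.length + r * j = N → 2 ^ (j + 1) ∣ truncP r j d y - a j := by
  obtain ⟨e₁, he₁, hlabel⟩ := exists_agreeBelow_map_label_eq hℓ hσc he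
  have hfork (y : List Bool) (j : ℕ) : (∃ v ∈ fork r (j + 1) y, ℓ v = c) ↔ ℓ y = c := by
    simp only [mem_fork]
    constructor
    · rintro ⟨-, ⟨s, w, hw, rfl⟩, hc⟩
      exact (exists_mem_Wset_label_eq_iff hper hℓ j y s).1 ⟨w, hw, hc⟩
    · intro hy
      obtain ⟨w, hw, hc⟩ := (exists_mem_Wset_label_eq_iff hper hℓ j y true).2 hy
      exact ⟨_, ⟨true, w, hw, rfl⟩, hc⟩
  obtain ⟨d, hd, hchange, hdvd⟩ := exists_forall_two_pow_dvd_truncP (Z := fun v => ℓ v = c) N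
    (fun y j _ hy => (exists_mem_Wset_label_eq_iff hper hℓ j y true).2 ((hfork y j).1 hy)) ha
    fun y j hlt => truncP_eq_of_agreeBelow he₁ hlt ▸ hP y j hlt
  have hlabel' (w : List Bool) (hw : w.length ≤ N + 1) : σ (ℓ w) = ℓ (d.act w) := by
    rw [hlabel w hw, hℓ.act_eq_of_agreeBelow hd (fun v hv hvN => ?_) hw]
    rw [← hlabel v (by omega), hchange v hv, hσc]
  refine ⟨d, hd.trans he₁, hlabel', fun y j hy => ?_⟩
  by_cases hyc : ℓ y = c
  · cases j with
    | zero => exact ha.dvd_truncP_zero_sub r d y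
    | succ j => exact hdvd y j hy ((hfork y j).2 hyc)
  · rw [← hζ.zpow_eq_zpow_iff h2, ← hσζ]
    exact (map_rootTower hper hℓ hζ hcoh hσc hlabel' (by omega) hyc).symm

theorem exists_mem_Mgroup_lift [NeZero r] (hper : (fun z : L => z ^ 2 + c)^[r] 0 = 0)
    (hℓ : IsLabeling c x₀ ℓ) (hζ : IsTwoPowRootTower ζ) (hcoh : IsCoherent r ζ ℓ)
    (h2 : (2 : L) ≠ 0) (hσc : σ c = c) (hσx : σ x₀ = x₀) :
    ∃ e ∈ Mgroup r, (∀ w, σ (ℓ w) = ℓ (e.act w)) ∧ ∀ y j, σ (ζ j) = ζ j ^ truncP r j e y := by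
  obtain ⟨a, ha, hσζ⟩ := exists_isUnitApprox_map σ hζ h2
  obtain ⟨e, he⟩ := Portrait.exists_forall_of_levelwise
    (fun m e => (∀ w : List Bool, w.length ≤ m + 1 → σ (ℓ w) = ℓ (e.act w)) ∧
      ∀ y j, y.length + r * j = m → 2 ^ (j + 1) ∣ truncP r j e y - a j)
    (fun m e d hed ⟨hlabel, hP⟩ => ⟨fun w hw => hed w hw ▸ hlabel w hw, fun y j hy => by
      rw [← truncP_eq_of_agreeBelow hed (by omega)]; exact hP y j hy⟩)
    fun m e hprev => exists_agreeBelow_lift_level hper hℓ hζ hcoh h2 hσc ha hσζ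
      (fun w hw => by
        rcases m.eq_zero_or_pos with rfl | hm
        · rw [List.length_eq_zero_iff.1 (Nat.le_zero.1 hw), Portrait.act_nil, hℓ.root, hσx]
        · exact (hprev (m - 1) (by omega)).1 w (by omega))
      fun y j hlt => (hprev _ hlt).2 y j rfl
  have hP (y : List Bool) (j : ℕ) : 2 ^ (j + 1) ∣ truncP r j e y - a j := (he _).2 y j rfl
  refine ⟨e, mem_Mgroup_of_forall_dvd hP, fun w => (he w.length).1 w (by omega), fun y j => ?_⟩
  rw [hσζ, (hζ.zpow_eq_zpow_iff h2 j _ _).2 (hP y j)]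

end GaloisAction

/-! ### Degrees of Galois extensions and of iterated preimage fields -/

section FieldTheory

open IntermediateField

variable {k Ω : Type*} [Field k] [Field Ω] [Algebra k Ω]

lemma exists_isTwoPowRootTower [IsAlgClosed Ω] : ∃ ζ : ℕ → Ω, IsTwoPowRootTower ζ := by
  choose s hs using fun z : Ω => IsAlgClosed.exists_pow_nat_eq z two_pos
  exact ⟨fun n => s^[n] (-1), rfl, fun j => by rw [Function.iterate_succ_apply', hs]⟩

lemma exists_isLabeling [IsAlgClosed Ω] (c x₀ : Ω) : ∃ ℓ, IsLabeling c x₀ ℓ := by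
  choose s hs using fun z : Ω => IsAlgClosed.exists_pow_nat_eq (z - c) two_pos
  refine ⟨fun w => w.foldl (fun z b => if b then s z else -s z) x₀, rfl, fun w b => ?_,
    fun w => by simp [List.foldl_append]⟩
  cases b <;> simp [List.foldl_append, hs]

lemma isSeparable_of_sq (h2 : (2 : Ω) ≠ 0) {x : Ω} (h : IsSeparable k (x ^ 2)) :
    IsSeparable k x := by
  rcases eq_or_ne x 0 with rfl | hx
  · simpa using h
  let E := separableClosure k Ω
  let y : E := ⟨x ^ 2, mem_separableClosure_iff.2 h⟩
  have h2E : (2 : E) ≠ 0 := fun h0 => h2 (congrArg (algebraMap E Ω) h0)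
  have hy : y ≠ 0 := fun h0 => pow_ne_zero 2 hx (congrArg Subtype.val h0)
  have hroot : aeval x (X ^ 2 - C y) = 0 := by
    simp [y]
  exact IsSeparable.of_algebra_isSeparable_of_isSeparable (E := E) k
    ((separable_X_pow_sub_C y (by exact_mod_cast h2E) hy).of_dvd (minpoly.dvd E x hroot))

lemma IsLabeling.isSeparable (h2 : (2 : Ω) ≠ 0) {c x₀ : k} {ℓ : List Bool → Ω}
    (hℓ : IsLabeling (algebraMap k Ω c) (algebraMap k Ω x₀) ℓ) (w : List Bool) :
    IsSeparable k (ℓ w) := by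
  induction w using List.reverseRecOn with
  | nil => simpa only [hℓ.root] using isSeparable_algebraMap x₀
  | append_singleton w s ih =>
    refine isSeparable_of_sq h2 ?_
    rw [hℓ.sq]
    exact Field.isSeparable_sub ih (isSeparable_algebraMap c)

lemma normal_adjoin_of_forall_mem [Normal k Ω] {T : Set Ω}
    (hT : ∀ σ : Ω ≃ₐ[k] Ω, ∀ t ∈ T, σ t ∈ adjoin k T) : Normal k (adjoin k T) := by
  rw [normal_iff_forall_map_le']
  intro σ
  rw [adjoin_map, adjoin_le_iff]
  rintro _ ⟨t, ht, rfl⟩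
  exact hT σ t ht

lemma restrictNormalHom_adjoin_eq_iff {T : Set Ω} [Normal k (adjoin k T)] {σ τ : Ω ≃ₐ[k] Ω} :
    AlgEquiv.restrictNormalHom (adjoin k T) σ = AlgEquiv.restrictNormalHom (adjoin k T) τ ↔
      ∀ t ∈ T, σ t = τ t := by
  rw [AlgEquiv.ext_iff]
  simp_rw [Subtype.ext_iff, AlgEquiv.restrictNormalHom_apply]
  refine ⟨fun h t ht => h ⟨t, subset_adjoin k T ht⟩, fun h x => ?_⟩
  exact DFunLike.congr_fun (algHom_ext_of_eq_adjoin k rfl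
    (φ₁ := (σ : Ω →ₐ[k] Ω).comp (adjoin k T).val) (φ₂ := (τ : Ω →ₐ[k] Ω).comp (adjoin k T).val)
    fun t ht => h t ht) x

variable {ι : Type*} {f : ι → Ω}

lemma finrank_adjoin_range_eq_card [Normal k Ω] [Finite ι]
    (hf : ∀ (σ : Ω ≃ₐ[k] Ω) i, σ (f i) ∈ adjoin k (Set.range f))
    (hsep : ∀ i, IsSeparable k (f i)) :
    Module.finrank k (adjoin k (Set.range f)) =
      Nat.card (Set.range fun (σ : Ω ≃ₐ[k] Ω) i => σ (f i)) := by
  let E := adjoin k (Set.range f)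
  have : Normal k E := normal_adjoin_of_forall_mem (by rintro σ _ ⟨i, rfl⟩; exact hf σ i)
  have : Algebra.IsSeparable k E :=
    (isSeparable_adjoin_iff_isSeparable k Ω).2 (by rintro _ ⟨i, rfl⟩; exact hsep i)
  have : IsGalois k E := ⟨⟩
  have : FiniteDimensional k E :=
    finiteDimensional_adjoin (by rintro _ ⟨i, rfl⟩; exact (hsep i).isIntegral)
  have hker : Setoid.ker (AlgEquiv.restrictNormalHom (K₁ := Ω) E) =
      Setoid.ker fun (σ : Ω ≃ₐ[k] Ω) i => σ (f i) := by
    ext σ τ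
    simp only [Setoid.ker_def, funext_iff]
    rw [restrictNormalHom_adjoin_eq_iff, Set.forall_mem_range]
  rw [← IsGalois.card_aut_eq_finrank]
  exact Nat.card_congr ((Setoid.quotientKerEquivOfSurjective _
    (AlgEquiv.restrictNormalHom_surjective Ω)).symm.trans
      ((Quotient.congrRight (Setoid.ext_iff.1 hker ·)).trans (Setoid.quotientKerEquivRange _)))

lemma card_range_eq_card_iff {A B Y : Type*} [Finite A] {F : A → Y} {g : B → Y}
    (hgF : Set.range g ⊆ Set.range F) :
    Nat.card (Set.range g) = Nat.card A ↔ Set.range F ⊆ Set.range g ∧ F.Injective := by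
  refine ⟨fun hcard => ?_, fun ⟨hFg, hinj⟩ => ?_⟩
  · have hle : Nat.card (Set.range g) ≤ Nat.card (Set.range F) :=
      Nat.card_mono (Set.finite_range F) hgF
    have hFA : Nat.card (Set.range F) = Nat.card A :=
      (Finite.card_range_le F).antisymm (hcard ▸ hle)
    refine ⟨(Set.eq_of_subset_of_ncard_le hgF ?_).ge, ?_⟩
    · exact (hFA.trans hcard.symm).le
    · exact Set.rangeFactorization_injective.1
        ((Nat.bijective_iff_surjective_and_card _).2
          ⟨Set.rangeFactorization_surjective, hFA.symm⟩).1
  · rw [hgF.antisymm hFg]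
    exact (Nat.card_congr (Equiv.ofInjective F hinj)).symm

lemma finrank_adjoin_range_eq_card_iff [Normal k Ω] [Finite ι]
    (hf : ∀ (σ : Ω ≃ₐ[k] Ω) i, σ (f i) ∈ adjoin k (Set.range f))
    (hsep : ∀ i, IsSeparable k (f i)) {A : Type*} [Finite A] (F : A → ι → Ω)
    (hF : ∀ σ : Ω ≃ₐ[k] Ω, ∃ a, ∀ i, σ (f i) = F a i) :
    Module.finrank k (adjoin k (Set.range f)) = Nat.card A ↔
      (∀ a, ∃ σ : Ω ≃ₐ[k] Ω, ∀ i, σ (f i) = F a i) ∧ F.Injective := by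
  rw [finrank_adjoin_range_eq_card hf hsep, card_range_eq_card_iff (F := F), Set.range_subset_iff]
  · simp only [Set.mem_range, funext_iff]
  · rintro _ ⟨σ, rfl⟩
    obtain ⟨a, ha⟩ := hF σ
    exact ⟨a, (funext ha).symm⟩

end FieldTheory

section PreimageField

open IntermediateField

variable {k Ω : Type*} [Field k] [Field Ω] [Algebra k Ω]

lemma aeval_iterate {c : k} {F : ℕ → k[X]} (hF₀ : F 0 = X)
    (hFs : ∀ m, F (m + 1) = (X ^ 2 + C c).comp (F m)) (n : ℕ) (t : Ω) :
    aeval t (F n) = (fun z : Ω => z ^ 2 + algebraMap k Ω c)^[n] t := by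
  induction n with
  | zero => simp [hF₀]
  | succ n ih => simp [hFs, Function.iterate_succ_apply', ih]

lemma natDegree_iterate {c : k} {F : ℕ → k[X]} (hF₀ : F 0 = X)
    (hFs : ∀ m, F (m + 1) = (X ^ 2 + C c).comp (F m)) (n : ℕ) : (F n).natDegree = 2 ^ n := by
  induction n with
  | zero => simp [hF₀]
  | succ n ih => rw [hFs, natDegree_comp, ih, natDegree_X_pow_add_C, pow_succ']

lemma algebraMap_iterate (c t : k) (n : ℕ) :
    algebraMap k Ω ((fun z : k => z ^ 2 + c)^[n] t) =
      (fun z : Ω => z ^ 2 + algebraMap k Ω c)^[n] (algebraMap k Ω t) :=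
  Function.Semiconj.iterate_right (f := algebraMap k Ω) (fun z => by simp) n t

lemma IsLabeling.exists_of_iterate_eq {c x₀ : Ω} {ℓ : List Bool → Ω} (hℓ : IsLabeling c x₀ ℓ)
    {t : Ω} {n : ℕ} (ht : (fun z : Ω => z ^ 2 + c)^[n] t = x₀) :
    ∃ w : List Bool, w.length = n ∧ ℓ w = t := by
  have hprod := hℓ.prod_words_sub t n []
  rw [hℓ.root, ht, sub_self, Finset.prod_eq_zero_iff] at hprod
  obtain ⟨w, hw, hwt⟩ := hprod
  exact ⟨w, mem_words.1 hw, (sub_eq_zero.1 hwt).symm⟩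

lemma IsLabeling.iterate_length {c x₀ : Ω} {ℓ : List Bool → Ω} (hℓ : IsLabeling c x₀ ℓ)
    (w : List Bool) : (fun z : Ω => z ^ 2 + c)^[w.length] (ℓ w) = x₀ := by
  have hprod := hℓ.prod_words_sub (ℓ w) w.length []
  rw [hℓ.root, Finset.prod_eq_zero (mem_words.2 rfl) (by simp)] at hprod
  exact sub_eq_zero.1 hprod.symm

variable {c x₀ : k} {ℓ : List Bool → Ω}

lemma IsLabeling.rootSet_iterate (hℓ : IsLabeling (algebraMap k Ω c) (algebraMap k Ω x₀) ℓ)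
    {F : ℕ → k[X]} (hF₀ : F 0 = X) (hFs : ∀ m, F (m + 1) = (X ^ 2 + C c).comp (F m)) (n : ℕ) :
    (F n - C x₀).rootSet Ω = ℓ '' {w | w.length = n} := by
  have hne : F n - C x₀ ≠ 0 := fun h => by
    have hdeg := natDegree_iterate hF₀ hFs n
    rw [sub_eq_zero.1 h, natDegree_C] at hdeg
    exact pow_ne_zero n two_ne_zero hdeg.symm
  ext t
  rw [mem_rootSet_of_ne hne, map_sub, aeval_C, aeval_iterate hF₀ hFs, sub_eq_zero]
  exact ⟨hℓ.exists_of_iterate_eq, by rintro ⟨w, rfl, rfl⟩; exact hℓ.iterate_length w⟩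

lemma IsLabeling.mem_adjoin_of_length_le
    (hℓ : IsLabeling (algebraMap k Ω c) (algebraMap k Ω x₀) ℓ) {n : ℕ} {w : List Bool}
    (hw : w.length ≤ n) : ℓ w ∈ adjoin k (ℓ '' {w | w.length = n}) := by
  obtain ⟨m, rfl⟩ := Nat.exists_eq_add_of_le hw
  clear hw
  induction m generalizing w with
  | zero => exact subset_adjoin k _ ⟨w, rfl, rfl⟩
  | succ m ih =>
    have := ih (w := w ++ [false])
    rw [List.length_append, List.length_singleton, add_assoc, add_comm 1] at this
    rw [← hℓ.sq_add w false]
    exact add_mem (pow_mem this 2) (IntermediateField.algebraMap_mem _ c)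

lemma IsLabeling.adjoin_rootSet_iterate
    (hℓ : IsLabeling (algebraMap k Ω c) (algebraMap k Ω x₀) ℓ) {F : ℕ → k[X]} (hF₀ : F 0 = X)
    (hFs : ∀ m, F (m + 1) = (X ^ 2 + C c).comp (F m)) (n : ℕ) :
    adjoin k ((F n - C x₀).rootSet Ω) =
      adjoin k (Set.range fun w : {w : List Bool // w.length ≤ n} => ℓ w) := by
  rw [hℓ.rootSet_iterate hF₀ hFs]
  refine le_antisymm (adjoin.mono _ _ _ ?_) (adjoin_le_iff.2 ?_)
  · rintro _ ⟨w, hw, rfl⟩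
    exact ⟨⟨w, le_of_eq hw⟩, rfl⟩
  · rintro _ ⟨w, rfl⟩
    exact hℓ.mem_adjoin_of_length_le w.2

lemma IsLabeling.iSup_adjoin_rootSet_iterate
    (hℓ : IsLabeling (algebraMap k Ω c) (algebraMap k Ω x₀) ℓ) {F : ℕ → k[X]} (hF₀ : F 0 = X)
    (hFs : ∀ m, F (m + 1) = (X ^ 2 + C c).comp (F m)) :
    ⨆ n, adjoin k ((F n - C x₀).rootSet Ω) = adjoin k (Set.range ℓ) := by
  simp_rw [hℓ.rootSet_iterate hF₀ hFs]
  rw [← adjoin_iUnion, ← Set.image_iUnion, ← Set.image_univ]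
  congr
  ext w
  simp

lemma IsLabeling.map_mem_range (hℓ : IsLabeling (algebraMap k Ω c) (algebraMap k Ω x₀) ℓ)
    (σ : Ω ≃ₐ[k] Ω) (w : List Bool) : σ (ℓ w) ∈ Set.range ℓ := by
  have hσ : Function.Semiconj σ (fun z : Ω => z ^ 2 + algebraMap k Ω c)
    (fun z : Ω => z ^ 2 + algebraMap k Ω c) := fun z => by simp
  have hiter := hσ.iterate_right w.length (ℓ w)
  rw [hℓ.iterate_length, AlgEquiv.commutes] at hiter
  obtain ⟨v, -, hv⟩ := hℓ.exists_of_iterate_eq hiter.symm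
  exact ⟨v, hv⟩

lemma IsLabeling.injOn {c x₀ : Ω} (hℓ : IsLabeling c x₀ ℓ) (h2 : (2 : Ω) ≠ 0)
    (hc : ∀ w, ℓ w ≠ c) (n : ℕ) : Set.InjOn ℓ {w | w.length = n} := by
  induction n with
  | zero =>
    intro w hw v hv _
    exact (List.length_eq_zero_iff.1 hw).trans (List.length_eq_zero_iff.1 hv).symm
  | succ n ih =>
    intro w hw v hv hwv
    obtain ⟨w, s, rfl⟩ := (List.eq_nil_or_concat' w).resolve_left
      (List.ne_nil_of_length_eq_add_one hw)
    obtain ⟨v, t, rfl⟩ := (List.eq_nil_or_concat' v).resolve_left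
      (List.ne_nil_of_length_eq_add_one hv)
    obtain rfl : w = v := ih (by simpa using hw) (by simpa using hv) <| by
      rw [← hℓ.sq_add w s, hwv, hℓ.sq_add]
    have hne : ℓ (w ++ [true]) ≠ -ℓ (w ++ [true]) := fun h =>
      hc w ((hℓ.snoc_eq_zero_iff w true).1 (by
        rwa [eq_neg_iff_add_eq_zero, ← two_mul, mul_eq_zero, or_iff_right h2] at h))
    cases s <;> cases t
    · rfl
    · exact absurd (hwv.symm.trans (hℓ.neg w)) hne
    · exact absurd (hwv.trans (hℓ.neg w)) hne
    · rfl

end PreimageField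

/-! ### The image of the Galois group in `Mgroup r` -/

section GaloisImage

open IntermediateField Portrait

instance finite_MsetN (r n : ℕ) : Finite (MsetN r n) := by
  have : Finite {w : List Bool // w.length ≤ n} := (List.finite_length_le Bool n).to_subtype
  have hfin : (Set.pi Set.univ fun w : {w : List Bool // w.length ≤ n} =>
      {v : List Bool | v.length = w.1.length}).Finite :=
    Set.Finite.pi fun w => List.finite_length_eq Bool _
  refine (hfin.subset ?_).to_subtype
  rintro _ ⟨σ, hσ, rfl⟩ w -
  exact hσ.1.2.1 w

variable {k Ω : Type*} [Field k] [Field Ω] [Algebra k Ω] {c x₀ : k} {ℓ : List Bool → Ω}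
  {r n : ℕ} [NeZero r]

lemma forall_mem_MsetN {p : ({w : List Bool // w.length ≤ n} → List Bool) → Prop} :
    (∀ τ ∈ MsetN r n, p τ) ↔ ∀ e ∈ Mgroup r, p fun w => e.act w := by
  simp only [MsetN, Set.forall_mem_image, mem_Mset_iff]
  exact ⟨fun h e he => h ⟨e, he, rfl⟩, fun h _ ⟨e, he, hσ⟩ => hσ ▸ h e he⟩

/-- Every Galois automorphism permutes the labels through an element of `Mgroup r`. -/
def GaloisImageLE (k : Type*) {Ω : Type*} [Field k] [Field Ω] [Algebra k Ω] (r : ℕ)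
    [NeZero r] (ℓ : List Bool → Ω) : Prop :=
  ∀ σ : Ω ≃ₐ[k] Ω, ∃ e ∈ Mgroup r, ∀ w, σ (ℓ w) = ℓ (e.act w)

/-- Every element of `Mgroup r` agrees with a Galois automorphism on the labels of level at
most `n`. -/
def GaloisImageGE (k : Type*) {Ω : Type*} [Field k] [Field Ω] [Algebra k Ω] (r : ℕ)
    [NeZero r] (ℓ : List Bool → Ω) (n : ℕ) : Prop :=
  ∀ e ∈ Mgroup r, ∃ σ : Ω ≃ₐ[k] Ω, ∀ w : List Bool, w.length ≤ n → σ (ℓ w) = ℓ (e.act w)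

lemma GaloisImageGE.mono {m : ℕ} (h : GaloisImageGE k r ℓ n) (hm : m ≤ n) :
    GaloisImageGE k r ℓ m := fun e he =>
  (h e he).imp fun _ hσ w hw => hσ w (hw.trans hm)

lemma finrank_adjoin_labels_eq_card_iff [Normal k Ω] (h2 : (2 : Ω) ≠ 0)
    (hℓ : IsLabeling (algebraMap k Ω c) (algebraMap k Ω x₀) ℓ) (hLE : GaloisImageLE k r ℓ) :
    Module.finrank k (adjoin k (Set.range fun w : {w : List Bool // w.length ≤ n} => ℓ w)) =
        Nat.card (MsetN r n) ↔
      GaloisImageGE k r ℓ n ∧ ∀ e ∈ Mgroup r, ∀ d ∈ Mgroup r,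
        (∀ w : List Bool, w.length ≤ n → ℓ (e.act w) = ℓ (d.act w)) → AgreeBelow n e d := by
  have : Finite {w : List Bool // w.length ≤ n} := (List.finite_length_le Bool n).to_subtype
  rw [finrank_adjoin_range_eq_card_iff (F := fun (τ : MsetN r n) w => ℓ (τ.1 w))]
  · simp only [Function.Injective, Subtype.forall, Subtype.mk.injEq, forall_mem_MsetN, funext_iff]
    rfl
  · intro σ w
    obtain ⟨e, -, he⟩ := hLE σ
    exact subset_adjoin _ _ ⟨⟨e.act w, by simpa using w.2⟩, (he w).symm⟩
  · exact fun w => hℓ.isSeparable h2 w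
  · intro σ
    obtain ⟨e, he, hσ⟩ := hLE σ
    exact ⟨⟨_, e.act, (mem_Mset_iff _).2 ⟨e, he, rfl⟩, rfl⟩, fun w => hσ w⟩

lemma IsLabeling.agreeBelow_of_label_act_eq {c x₀ : Ω} (hℓ : IsLabeling c x₀ ℓ)
    (h2 : (2 : Ω) ≠ 0) (hc : ∀ w, ℓ w ≠ c) {e d : Portrait}
    (h : ∀ w : List Bool, w.length ≤ n → ℓ (e.act w) = ℓ (d.act w)) : AgreeBelow n e d :=
  fun w hw => hℓ.injOn h2 hc w.length (length_act e w) (length_act d w) (h w hw)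

lemma finrank_adjoin_labels_eq_card [Normal k Ω] (h2 : (2 : Ω) ≠ 0)
    (hℓ : IsLabeling (algebraMap k Ω c) (algebraMap k Ω x₀) ℓ) (hLE : GaloisImageLE k r ℓ)
    (hGE : GaloisImageGE k r ℓ n) (hc : ∀ w, ℓ w ≠ algebraMap k Ω c) :
    Module.finrank k (adjoin k (Set.range fun w : {w : List Bool // w.length ≤ n} => ℓ w)) =
      Nat.card (MsetN r n) :=
  (finrank_adjoin_labels_eq_card_iff h2 hℓ hLE).2
    ⟨hGE, fun _ _ _ _ h => hℓ.agreeBelow_of_label_act_eq h2 hc h⟩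

lemma IsLabeling.exists_label_mem_range_algebraMap
    (hper : (fun z : k => z ^ 2 + c)^[r] 0 = 0)
    (hℓ : IsLabeling (algebraMap k Ω c) (algebraMap k Ω x₀) ℓ) {w : List Bool}
    (hw : ℓ w = algebraMap k Ω c) (n : ℕ) :
    ∃ v : List Bool, v.length = n ∧ ℓ v ∈ Set.range (algebraMap k Ω) := by
  have hx₀ : (fun z : k => z ^ 2 + c)^[w.length + 1] 0 = x₀ := by
    apply (algebraMap k Ω).injective
    simpa [← hℓ.iterate_length w, hw] using algebraMap_iterate (Ω := Ω) c 0 (w.length + 1)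
  have hn : n + (w.length + 1 + (r - 1) * n) = w.length + 1 + n * r := by
    obtain ⟨m, rfl⟩ := Nat.exists_eq_add_of_le' (NeZero.pos r)
    simp only [add_tsub_cancel_right]
    ring
  have hpre : (fun z : k => z ^ 2 + c)^[n] ((fun z : k => z ^ 2 + c)^[w.length + 1 + (r - 1) * n] 0)
      = x₀ := by
    rw [← Function.iterate_add_apply, hn, Function.iterate_add_apply,
      (Function.IsPeriodicPt.const_mul hper n).eq, hx₀]
  obtain ⟨v, hv, hvt⟩ := hℓ.exists_of_iterate_eq (by rw [← algebraMap_iterate, hpre])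
  exact ⟨v, hv, _, hvt.symm⟩

lemma IsLabeling.eq_of_map_snoc_mem_range (h2 : (2 : Ω) ≠ 0)
    (hℓ : IsLabeling (algebraMap k Ω c) (algebraMap k Ω x₀) ℓ) {σ : Ω ≃ₐ[k] Ω} {e : Portrait}
    {v : List Bool} {s : Bool} (hσ : σ (ℓ (v ++ [s])) = ℓ (e.act (v ++ [s])))
    (hv : e.act v = v) (hev : e v = true)
    (hs : ℓ (v ++ [s]) ∈ Set.range (algebraMap k Ω)) : ℓ v = algebraMap k Ω c := by
  obtain ⟨t, ht⟩ := hs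
  rw [← ht, AlgEquiv.commutes, ht, act_snoc, hv, hev, hℓ.snoc, hℓ.snoc v (xor s true),
    swapSign_xor, mul_smul, smul_left_cancel_iff, swapSign_true, Units.neg_smul, one_smul,
    eq_neg_iff_add_eq_zero, ← two_mul, mul_eq_zero, or_iff_right h2, hℓ.snoc_eq_zero_iff] at hσ
  exact hσ

lemma exists_mem_Mgroup_agreeBelow (e₀ : Portrait) :
    ∃ e ∈ Mgroup r, AgreeBelow r e e₀ := by
  obtain ⟨e, he, hagree⟩ := exists_forall_Pr_eq (r := r) e₀ (P := 1) (by simp)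
  exact ⟨e, mem_Mgroup_of_forall he, hagree⟩

lemma label_eq_zero_of_critical (h2 : (2 : Ω) ≠ 0)
    (hper : (fun z : k => z ^ 2 + c)^[r] 0 = 0)
    (hℓ : IsLabeling (algebraMap k Ω c) (algebraMap k Ω x₀) ℓ) (hGE : GaloisImageGE k r ℓ 2)
    {w : List Bool} (hw : ℓ w = algebraMap k Ω c) (v : List Bool) : ℓ v = 0 := by
  have hflip (e₀ : Portrait) (v : List Bool) (hvr : v.length < r) (hv : v.length ≤ 1)
      (hact : e₀.act v = v) (hmark : e₀ v = true) (s : Bool)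
      (hs : ℓ (v ++ [s]) ∈ Set.range (algebraMap k Ω)) : ℓ v = algebraMap k Ω c := by
    obtain ⟨e, he, hagree⟩ := exists_mem_Mgroup_agreeBelow (r := r) e₀
    obtain ⟨σ, hσ⟩ := hGE e he
    exact hℓ.eq_of_map_snoc_mem_range h2 (hσ _ (by simpa using hv))
      ((hagree v hvr.le).trans hact) ((hagree.apply_eq hvr).trans hmark) hs
  have hx₀ : algebraMap k Ω x₀ = algebraMap k Ω c := by
    obtain ⟨v, hv, hmem⟩ := hℓ.exists_label_mem_range_algebraMap hper hw 1
    obtain ⟨s, rfl⟩ := List.length_eq_one_iff.1 hv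
    rw [← hℓ.root]
    exact hflip ⟨fun _ => true⟩ [] (NeZero.pos r) (by simp) rfl rfl s hmem
  have hone (s : Bool) : ℓ [s] = 0 := (hℓ.snoc_eq_zero_iff [] s).2 (hℓ.root.trans hx₀)
  have hc₀ : algebraMap k Ω c = 0 := by
    rcases (Nat.one_le_iff_ne_zero.2 (NeZero.ne r)).eq_or_lt with rfl | hr
    · simpa using hper
    · obtain ⟨v, hv, hmem⟩ := hℓ.exists_label_mem_range_algebraMap hper hw 2
      obtain ⟨s, t, rfl⟩ := List.length_eq_two.1 hv
      rw [← hone s]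
      exact (hflip ⟨fun v => decide (v = [s])⟩ [s] hr le_rfl (by simp [act_cons]) (by simp) t
        hmem).symm
  induction v using List.reverseRecOn with
  | nil => rw [hℓ.root, hx₀, hc₀]
  | append_singleton v s ih => rw [hℓ.snoc_eq_zero_iff, ih, hc₀]

lemma label_ne_of_faithful (h2 : (2 : Ω) ≠ 0)
    (hper : (fun z : k => z ^ 2 + c)^[r] 0 = 0)
    (hℓ : IsLabeling (algebraMap k Ω c) (algebraMap k Ω x₀) ℓ) (hGE : GaloisImageGE k r ℓ 2)
    (hfaithful : ∀ e ∈ Mgroup r, (∀ w, ℓ (e.act w) = ℓ w) → e [] = false) (w : List Bool) :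
    ℓ w ≠ algebraMap k Ω c := by
  intro hw
  obtain ⟨e, he, hagree⟩ := exists_mem_Mgroup_agreeBelow (r := r) ⟨fun _ => true⟩
  have hzero := label_eq_zero_of_critical h2 hper hℓ hGE hw
  have hnil := hfaithful e he fun v => by rw [hzero, hzero]
  exact absurd ((hagree.apply_eq (w := []) (NeZero.pos r)).symm.trans hnil) (by simp)

end GaloisImage

/-! ### Level signs and the square roots of the `D i` -/

section LevelRoot

variable {L : Type*} [Field L] {c x₀ : L} {ℓ : List Bool → L}

/-- The square root of `D (i + 1)` given by the product of the labels `ℓ(ua)` over the words `u` of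
length `i`. -/
def levelRoot (ℓ : List Bool → L) (i : ℕ) : L :=
  ∏ u ∈ words i, ℓ (u ++ [false])

lemma levelRoot_sq (hℓ : IsLabeling c x₀ ℓ) (i : ℕ) :
    levelRoot ℓ i ^ 2 = (-1) ^ 2 ^ i * ((fun z : L => z ^ 2 + c)^[i] c - x₀) := by
  rw [← hℓ.root, ← hℓ.prod_words_sub, ← card_words i, ← Finset.prod_const,
    ← Finset.prod_mul_distrib, levelRoot, ← Finset.prod_pow]
  refine Finset.prod_congr rfl fun u _ => ?_
  rw [hℓ.sq, List.nil_append]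
  ring

lemma levelRoot_ne_zero (hℓ : IsLabeling c x₀ ℓ) (hc : ∀ w, ℓ w ≠ c) (i : ℕ) :
    levelRoot ℓ i ≠ 0 :=
  Finset.prod_ne_zero_iff.2 fun u _ h => hc u ((hℓ.snoc_eq_zero_iff u false).1 h)

lemma label_ne_of_forall_levelRoot_ne_zero {r : ℕ} [NeZero r] (hℓ : IsLabeling c x₀ ℓ)
    (hper : (fun z : L => z ^ 2 + c)^[r] 0 = 0) (h : ∀ i < r, levelRoot ℓ i ≠ 0)
    (w : List Bool) : ℓ w ≠ c := by
  intro hw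
  have hc : Function.IsPeriodicPt (fun z : L => z ^ 2 + c) r c := by
    simpa using Function.IsPeriodicPt.apply (f := fun z : L => z ^ 2 + c) hper
  have hsq := levelRoot_sq hℓ (w.length % r)
  rw [hc.iterate_mod_apply, ← hℓ.iterate_length w, hw, sub_self, mul_zero, sq_eq_zero_iff] at hsq
  exact h _ (Nat.mod_lt _ (NeZero.pos r)) hsq

lemma map_levelRoot {F : Type*} [FunLike F L L] [RingHomClass F L L] {σ : F} {e : Portrait}
    (hℓ : IsLabeling c x₀ ℓ) {i : ℕ}
    (he : ∀ w : List Bool, w.length ≤ i + 1 → σ (ℓ w) = ℓ (e.act w)) :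
    σ (levelRoot ℓ i) = levelSign i e • levelRoot ℓ i := by
  have hmap : ∀ u ∈ words i, σ (ℓ (u ++ [false])) = swapSign (e u) • ℓ (e.act u ++ [false]) := by
    intro u hu
    rw [he _ (by simp [mem_words.1 hu]), Portrait.act_snoc, hℓ.snoc, Bool.false_xor]
  have hperm := prod_words_act i e [] fun w => ℓ (w ++ [false])
  simp only [List.nil_append, Portrait.act_nil] at hperm
  rw [levelRoot, map_prod, Finset.prod_congr rfl hmap, Finset.prod_smul, hperm, levelSign_apply]

lemma levelRoot_sq_eq_algebraMap {k : Type*} [Field k] [Algebra k L] {c x₀ : k}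
    (hℓ : IsLabeling (algebraMap k L c) (algebraMap k L x₀) ℓ) {r : ℕ} {D : ℕ → k}
    (hD₁ : D 1 = x₀ - c)
    (hD : ∀ i, 2 ≤ i → i ≤ r → D i = (fun z : k => z ^ 2 + c)^[i] 0 - x₀) {i : ℕ} (hi : i < r) :
    levelRoot ℓ i ^ 2 = algebraMap k L (D (i + 1)) := by
  rw [levelRoot_sq hℓ, ← algebraMap_iterate]
  rcases Nat.eq_zero_or_pos i with rfl | hpos
  · simp [hD₁]
  · rw [hD _ (by omega) (by omega), Function.iterate_succ_apply,
      (even_two.pow_of_ne_zero hpos.ne').neg_one_pow]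
    simp

end LevelRoot

/-! ### Kummer theory of `k(ζ_8, √D_1, …, √D_r)` -/

section Kummer

open IntermediateField

variable {k Ω : Type*} [Field k] [Field Ω] [Algebra k Ω] {r : ℕ} {D : ℕ → k} {R : Fin r → Ω}
  {ζ : Ω}

lemma int_units_smul_left_inj (h2 : (2 : Ω) ≠ 0) {x : Ω} (hx : x ≠ 0) {a b : ℤˣ} :
    a • x = b • x ↔ a = b := by
  have hne : x ≠ -x := by
    rw [Ne, eq_neg_iff_add_eq_zero, ← two_mul]
    exact mul_ne_zero h2 hx
  rcases Int.units_eq_one_or a with rfl | rfl <;> rcases Int.units_eq_one_or b with rfl | rfl <;>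
    simp [Units.neg_smul, hne, hne.symm]

lemma exists_units_smul_eq_of_sq_eq_sq {x y : Ω} (h : y ^ 2 = x ^ 2) : ∃ b : ℤˣ, y = b • x := by
  rcases sq_eq_sq_iff_eq_or_eq_neg.1 h with rfl | rfl
  · exact ⟨1, (one_smul _ y).symm⟩
  · exact ⟨-1, by rw [Units.neg_smul, one_smul]⟩

lemma exists_pow_two_mul_add_one_eq (hζ : IsPrimitiveRoot ζ 8) {η : Ω}
    (hη : IsPrimitiveRoot η 8) : ∃ t : Fin 4, η = ζ ^ (2 * t.val + 1) := by
  obtain ⟨i, hi, hcop, rfl⟩ := hζ.isPrimitiveRoot_iff.1 hη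
  have hodd : i % 2 = 1 := Nat.odd_iff.1
    (Nat.coprime_two_right.1 (hcop.coprime_dvd_right (by norm_num : 2 ∣ 8)))
  exact ⟨⟨i / 2, by omega⟩, by congr; simp; omega⟩

lemma adjoin_roots_eq_adjoin_range (hR : ∀ i : Fin r, R i ^ 2 = algebraMap k Ω (D (i + 1))) :
    adjoin k ({ζ} ∪ {x : Ω | ∃ i : ℕ, 1 ≤ i ∧ i ≤ r ∧ x ^ 2 = algebraMap k Ω (D i)}) =
      adjoin k (Set.range fun o : Option (Fin r) => o.elim ζ R) := by
  refine le_antisymm (adjoin_le_iff.2 ?_) (adjoin.mono _ _ _ ?_)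
  · rintro x (rfl | ⟨i, hi, hir, hx⟩)
    · exact subset_adjoin _ _ ⟨none, rfl⟩
    · obtain ⟨i, rfl⟩ := Nat.exists_eq_add_of_le' hi
      have hRi := subset_adjoin k (Set.range fun o : Option (Fin r) => o.elim ζ R)
        ⟨some ⟨i, hir⟩, rfl⟩
      rcases sq_eq_sq_iff_eq_or_eq_neg.1 (hx.trans (hR ⟨i, hir⟩).symm) with rfl | rfl
      · exact hRi
      · exact neg_mem hRi
  · rintro _ ⟨_ | i, rfl⟩
    · exact Or.inl rfl
    · exact Or.inr ⟨i + 1, by omega, by omega, hR i⟩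

lemma injective_smul_root_pow_iff (h2 : (2 : Ω) ≠ 0) (hζ : IsPrimitiveRoot ζ 8) :
    (fun (a : Fin 4 × (Fin r → ℤˣ)) (o : Option (Fin r)) =>
        o.elim (ζ ^ (2 * a.1.val + 1)) fun i => a.2 i • R i).Injective ↔ ∀ i, R i ≠ 0 := by
  refine ⟨fun hinj i hi => ?_, ?_⟩
  · have heq := @hinj (0, 1) (0, Function.update 1 i (-1)) <| by
      funext o
      rcases o with _ | j
      · rfl
      · rcases eq_or_ne j i with rfl | hj <;> simp [*]
    have := congrFun (congrArg Prod.snd heq) i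
    simp at this
  · rintro hR ⟨t, b⟩ ⟨t', b'⟩ heq
    have hpow : ζ ^ (2 * t.val + 1) = ζ ^ (2 * t'.val + 1) := congrFun heq none
    have := hζ.pow_inj (by omega) (by omega) hpow
    exact Prod.ext (Fin.ext (by dsimp only; omega))
      (funext fun i => (int_units_smul_left_inj h2 (hR i)).1 (congrFun heq (some i)))

lemma finrank_adjoin_roots_eq_iff [Normal k Ω] (h2 : (2 : Ω) ≠ 0)
    (hR : ∀ i : Fin r, R i ^ 2 = algebraMap k Ω (D (i + 1))) (hζ : IsPrimitiveRoot ζ 8) :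
    Module.finrank k (adjoin k
        ({ζ} ∪ {x : Ω | ∃ i : ℕ, 1 ≤ i ∧ i ≤ r ∧ x ^ 2 = algebraMap k Ω (D i)})) = 2 ^ (r + 2) ↔
      (∀ (t : Fin 4) (b : Fin r → ℤˣ), ∃ σ : Ω ≃ₐ[k] Ω,
        σ ζ = ζ ^ (2 * t.val + 1) ∧ ∀ i, σ (R i) = b i • R i) ∧ ∀ i, R i ≠ 0 := by
  have hconj (σ : Ω ≃ₐ[k] Ω) : ∃ a : Fin 4 × (Fin r → ℤˣ), ∀ o : Option (Fin r),
      σ (o.elim ζ R) = o.elim (ζ ^ (2 * a.1.val + 1)) fun i => a.2 i • R i := by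
    obtain ⟨t, ht⟩ := exists_pow_two_mul_add_one_eq hζ (hζ.map_of_injective σ.injective)
    choose b hb using fun i => exists_units_smul_eq_of_sq_eq_sq (x := R i) (y := σ (R i))
      (by rw [← map_pow, hR, AlgEquiv.commutes])
    exact ⟨(t, b), fun | none => ht | some i => hb i⟩
  have hcard : Nat.card (Fin 4 × (Fin r → ℤˣ)) = 2 ^ (r + 2) := by
    rw [Nat.card_prod, Nat.card_fun, Nat.card_fin, Nat.card_fin, Nat.card_eq_fintype_card,
      Fintype.card_units_int, pow_add, mul_comm]
    norm_num
  rw [adjoin_roots_eq_adjoin_range hR, ← hcard,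
    finrank_adjoin_range_eq_card_iff ?_ ?_ _ hconj, injective_smul_root_pow_iff h2 hζ]
  · simp only [Prod.forall, Option.forall, Option.elim_none, Option.elim_some]
  · intro σ o
    obtain ⟨a, ha⟩ := hconj σ
    have hmem (o : Option (Fin r)) := subset_adjoin k
      (Set.range fun o : Option (Fin r) => o.elim ζ R) ⟨o, rfl⟩
    rw [ha]
    exact match o with
    | none => pow_mem (hmem none) _
    | some i => zsmul_mem (hmem (some i)) _
  · rintro (_ | i)
    · have hζ8 : IsSeparable k (((ζ ^ 2) ^ 2) ^ 2) := by
        rw [← pow_mul, ← pow_mul, hζ.pow_eq_one]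
        exact map_one (algebraMap k Ω) ▸ isSeparable_algebraMap 1
      exact isSeparable_of_sq h2 (isSeparable_of_sq h2 (isSeparable_of_sq h2 hζ8))
    · exact isSeparable_of_sq h2 (hR i ▸ isSeparable_algebraMap _)

end Kummer

/-! ### Square classes detect the full image -/

section SquareClasses

variable {k Ω : Type*} [Field k] [Field Ω] [Algebra k Ω] {c x₀ : k} {ℓ : List Bool → Ω}
  {ζ : ℕ → Ω} {r : ℕ} [NeZero r]

/-- The elements of `Mgroup r` through which some Galois automorphism acts on the labels. -/
def realizedSubgroup (k : Type*) {Ω : Type*} [Field k] [Field Ω] [Algebra k Ω] (r : ℕ) [NeZero r]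
    (ℓ : List Bool → Ω) : Subgroup (Mgroup r) where
  carrier := {e | ∃ σ : Ω ≃ₐ[k] Ω, ∀ w, σ (ℓ w) = ℓ (e.1.act w)}
  one_mem' := ⟨1, fun w => by simp⟩
  mul_mem' := by
    rintro e d ⟨σ, hσ⟩ ⟨τ, hτ⟩
    exact ⟨σ * τ, fun w => by simp [hσ, hτ, Portrait.act_mul]⟩
  inv_mem' := by
    rintro e ⟨σ, hσ⟩
    exact ⟨σ⁻¹, fun w => σ.injective <| by simp [hσ, AlgEquiv.aut_inv, Portrait.act_act_inv]⟩

lemma two_dvd_truncP_sub_one (r j : ℕ) (e : Portrait) (y : List Bool) :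
    2 ∣ truncP r j e y - 1 := by
  induction j with
  | zero => exact two_dvd_truncP_zero_sub_one r e y
  | succ j ih =>
    rw [truncP_succ, add_sub_right_comm]
    exact dvd_add ih (dvd_mul_of_dvd_left (dvd_pow_self 2 j.succ_ne_zero) _)

lemma two_pow_dvd_Pr_sub_iff (r j : ℕ) (e d : Portrait) (y : List Bool) :
    (2 : ℤ_[2]) ^ (j + 1) ∣ Pr r e.act y - Pr r d.act y ↔
      (2 : ℤ) ^ (j + 1) ∣ truncP r j e y - truncP r j d y := by
  rw [← two_pow_dvd_intCast_iff, Int.cast_sub]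
  refine dvd_iff_dvd_of_dvd_sub ?_
  rw [sub_sub_sub_comm]
  exact dvd_sub (two_pow_dvd_Pr_sub_truncP r j e y) (two_pow_dvd_Pr_sub_truncP r j d y)

theorem galoisImageGE_of_forall_exists (h2 : (2 : Ω) ≠ 0)
    (hper : (fun z : Ω => z ^ 2 + algebraMap k Ω c)^[r] 0 = 0)
    (hℓ : IsLabeling (algebraMap k Ω c) (algebraMap k Ω x₀) ℓ) (hζ : IsTwoPowRootTower ζ)
    (hcoh : IsCoherent r ζ ℓ)
    (hσ : ∀ (t : Fin 4) (b : Fin r → ℤˣ), ∃ σ : Ω ≃ₐ[k] Ω, σ (ζ 2) = ζ 2 ^ (2 * t.val + 1) ∧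
      ∀ i : Fin r, σ (levelRoot ℓ i) = b i • levelRoot ℓ i)
    (hne : ∀ i : Fin r, levelRoot ℓ i ≠ 0) (n : ℕ) : GaloisImageGE k r ℓ n := by
  have hfrattini : ∀ τ : Mgroup r, ∃ e ∈ realizedSubgroup k r ℓ,
      (∀ i < r, levelSign i (e : Portrait) = levelSign i (τ : Portrait)) ∧
        8 ∣ Pr r (e : Portrait).act [] - Pr r (τ : Portrait).act [] := by
    intro τ
    obtain ⟨t, ht⟩ : ∃ t : Fin 4, (8 : ℤ) ∣ truncP r 2 τ [] - (2 * t.val + 1 : ℕ) := by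
      have := two_dvd_truncP_sub_one r 2 τ []
      exact ⟨⟨((truncP r 2 τ [] - 1) / 2 % 4).toNat, by omega⟩, by push_cast; omega⟩
    obtain ⟨σ, hσζ, hσR⟩ := hσ t fun i => levelSign i (τ : Portrait)
    obtain ⟨e, he, hact, hcyc⟩ := exists_mem_Mgroup_lift (σ := σ) hper hℓ hζ hcoh h2
      (σ.commutes c) (σ.commutes x₀)
    refine ⟨⟨e, he⟩, ⟨σ, hact⟩, fun i hi => ?_, ?_⟩
    · exact (int_units_smul_left_inj h2 (hne ⟨i, hi⟩)).1 <|
        (map_levelRoot hℓ fun w _ => hact w).symm.trans (hσR ⟨i, hi⟩)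
    · have hpow : ζ 2 ^ truncP r 2 e [] = ζ 2 ^ ((2 * t.val + 1 : ℕ) : ℤ) := by
        rw [zpow_natCast, ← hσζ, hcyc]
      rw [hζ.zpow_eq_zpow_iff h2] at hpow
      have hdvd : 2 ^ (2 + 1) ∣ truncP r 2 e [] - truncP r 2 τ [] := by omega
      simpa [show (2 : ℤ_[2]) ^ (2 + 1) = 8 by norm_num] using
        (two_pow_dvd_Pr_sub_iff r 2 e τ []).2 hdvd
  intro τ hτ
  obtain ⟨e, ⟨σ, hσ⟩, hagree⟩ :=
    exists_agreeBelow_of_eight_dvd (realizedSubgroup k r ℓ) hfrattini n ⟨τ, hτ⟩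
  exact ⟨σ, fun w hw => by rw [hσ, hagree w hw]⟩

lemma exists_forall_levelSign_eq {r : ℕ} (b : Fin r → ℤˣ) :
    ∃ e : Portrait, ∀ i : Fin r, levelSign i e = b i := by
  classical
  refine ⟨⟨fun v => decide (∃ i : Fin r, v = List.replicate i false ∧ b i = -1)⟩, fun i => ?_⟩
  rw [levelSign_apply, Finset.prod_eq_single (List.replicate i.1 false)]
  · rcases Int.units_eq_one_or (b i) with hb | hb <;>
      simp [hb, Fin.val_inj]
  · intro v hv hne
    have hmark : ¬∃ j : Fin r, v = List.replicate j false ∧ b j = -1 := by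
      rintro ⟨j, rfl, -⟩
      exact hne (by simpa using congrArg (List.replicate · false) (mem_words.1 hv))
    simp [hmark]
  · simp

theorem GaloisImageGE.exists_map_eq (h2 : (2 : Ω) ≠ 0)
    (hper : (fun z : Ω => z ^ 2 + algebraMap k Ω c)^[r] 0 = 0)
    (hℓ : IsLabeling (algebraMap k Ω c) (algebraMap k Ω x₀) ℓ) (hζ : IsTwoPowRootTower ζ)
    (hcoh : IsCoherent r ζ ℓ) (hc : ℓ [] ≠ algebraMap k Ω c)
    (hGE : GaloisImageGE k r ℓ (2 * r + 1)) (t : Fin 4) (b : Fin r → ℤˣ) :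
    ∃ σ : Ω ≃ₐ[k] Ω, σ (ζ 2) = ζ 2 ^ (2 * t.val + 1) ∧
      ∀ i : Fin r, σ (levelRoot ℓ i) = b i • levelRoot ℓ i := by
  obtain ⟨e₀, he₀⟩ := exists_forall_levelSign_eq b
  obtain ⟨e, he, hagree⟩ := exists_forall_Pr_eq (r := r) e₀ (P := ((2 * t.val + 1 : ℕ) : ℤ_[2]))
    (by simp)
  obtain ⟨σ, hσ⟩ := hGE e (mem_Mgroup_of_forall he)
  refine ⟨σ, ?_, fun i => ?_⟩
  · rw [map_rootTower hper hℓ hζ hcoh (σ.commutes c) hσ (by simp; omega) hc, ← zpow_natCast,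
      hζ.zpow_eq_zpow_iff h2, ← two_pow_dvd_intCast_iff, ← dvd_neg]
    simpa [he] using two_pow_dvd_Pr_sub_truncP r 2 e []
  · rw [map_levelRoot hℓ fun w hw => hσ w (by omega), levelSign_eq_of_agreeBelow i.2 hagree, he₀]

end SquareClasses

/-! ### The Galois group of the full preimage field -/

section InfiniteGalois

open IntermediateField

lemma exists_algEquiv_forall_apply_eq {k K ι : Type*} [Field k] [Field K] [Algebra k K]
    [IsGalois k K] {f g : ι → K}
    (h : ∀ s : Finset ι, ∃ σ : K ≃ₐ[k] K, ∀ i ∈ s, σ (f i) = g i) :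
    ∃ σ : K ≃ₐ[k] K, ∀ i, σ (f i) = g i := by
  let _ : TopologicalSpace K := ⊥
  have : DiscreteTopology K := ⟨rfl⟩
  have : ContinuousSMul (K ≃ₐ[k] K) K :=
    continuousSMul_iff_stabilizer_isOpen.2 stabilizer_isOpen_of_isIntegral
  have hclosed (i : ι) : IsClosed {σ : K ≃ₐ[k] K | σ • f i = g i} :=
    isClosed_eq (continuous_id.smul continuous_const) continuous_const
  obtain ⟨σ, hσ⟩ := CompactSpace.iInter_nonempty hclosed fun s => by
    obtain ⟨σ, hσ⟩ := h s
    exact ⟨σ, Set.mem_iInter₂.2 hσ⟩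
  exact ⟨σ, Set.mem_iInter.1 hσ⟩

variable {k Ω : Type*} [Field k] [Field Ω] [Algebra k Ω] {c x₀ : k} {ℓ : List Bool → Ω}
  {r : ℕ} [NeZero r]

/-- The rule `σ (ℓ w) = ℓ (Φ σ w)` defines an isomorphism `Φ` from `Gal(K/k)` onto `M_{r,∞}`. -/
def IsGaloisIso (r : ℕ) (ℓ : List Bool → Ω) (K : IntermediateField k Ω) : Prop :=
  ∃ hmem : ∀ w : List Bool, ℓ w ∈ K, ∃ Φ : (K ≃ₐ[k] K) → (List Bool → List Bool),
    (∀ (σ : K ≃ₐ[k] K) (w : List Bool), σ ⟨ℓ w, hmem w⟩ = ⟨ℓ (Φ σ w), hmem (Φ σ w)⟩) ∧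
    Function.Injective Φ ∧ Set.range Φ = Mset r ∧ ∀ σ τ : K ≃ₐ[k] K, Φ (σ * τ) = Φ σ ∘ Φ τ

lemma IsLabeling.isGalois_adjoin_range [Normal k Ω] (h2 : (2 : Ω) ≠ 0)
    (hℓ : IsLabeling (algebraMap k Ω c) (algebraMap k Ω x₀) ℓ) :
    IsGalois k (adjoin k (Set.range ℓ)) where
  to_isSeparable := (isSeparable_adjoin_iff_isSeparable k Ω).2 <|
    Set.forall_mem_range.2 (hℓ.isSeparable h2)
  to_normal := normal_adjoin_of_forall_mem fun σ => Set.forall_mem_range.2 fun w =>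
    subset_adjoin _ _ (hℓ.map_mem_range σ w)

lemma exists_algEquiv_map_label_eq [Normal k Ω] (h2 : (2 : Ω) ≠ 0)
    (hℓ : IsLabeling (algebraMap k Ω c) (algebraMap k Ω x₀) ℓ)
    (hGE : ∀ n, GaloisImageGE k r ℓ n) {e : Portrait} (he : e ∈ Mgroup r) :
    ∃ σ : adjoin k (Set.range ℓ) ≃ₐ[k] adjoin k (Set.range ℓ),
      ∀ w, (σ ⟨ℓ w, subset_adjoin k _ ⟨w, rfl⟩⟩ : Ω) = ℓ (e.act w) := by
  have := hℓ.isGalois_adjoin_range h2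
  obtain ⟨σ, hσ⟩ := exists_algEquiv_forall_apply_eq (k := k)
    (f := fun w => (⟨ℓ w, subset_adjoin k _ ⟨w, rfl⟩⟩ : adjoin k (Set.range ℓ)))
    (g := fun w => (⟨ℓ (e.act w), subset_adjoin k _ ⟨_, rfl⟩⟩ : adjoin k (Set.range ℓ)))
    fun s => by
      obtain ⟨σ, hσ⟩ := hGE (s.sup List.length) e he
      exact ⟨AlgEquiv.restrictNormalHom _ σ, fun w hw => Subtype.ext <|
        (AlgEquiv.restrictNormalHom_apply ..).trans (hσ w (Finset.le_sup hw))⟩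
  exact ⟨σ, fun w => congrArg Subtype.val (hσ w)⟩

lemma isGaloisIso_adjoin_range [Normal k Ω] (h2 : (2 : Ω) ≠ 0)
    (hℓ : IsLabeling (algebraMap k Ω c) (algebraMap k Ω x₀) ℓ) (hc : ∀ w, ℓ w ≠ algebraMap k Ω c)
    (hLE : GaloisImageLE k r ℓ) (hGE : ∀ n, GaloisImageGE k r ℓ n) :
    IsGaloisIso r ℓ (adjoin k (Set.range ℓ)) := by
  have := hℓ.isGalois_adjoin_range h2
  have hlift (σ : adjoin k (Set.range ℓ) ≃ₐ[k] adjoin k (Set.range ℓ)) : ∃ e ∈ Mgroup r,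
      ∀ w, (σ ⟨ℓ w, subset_adjoin k _ ⟨w, rfl⟩⟩ : Ω) = ℓ (e.act w) := by
    obtain ⟨τ, rfl⟩ := AlgEquiv.restrictNormalHom_surjective Ω σ
    exact (hLE τ).imp fun e ⟨he, hτ⟩ => ⟨he, fun w =>
      (AlgEquiv.restrictNormalHom_apply ..).trans (hτ w)⟩
  choose e he hmap using hlift
  have hinj {f g : Portrait} (h : ∀ w, ℓ (f.act w) = ℓ (g.act w)) : f.act = g.act := funext fun w =>
    hℓ.injOn h2 hc w.length (Portrait.length_act f w) (Portrait.length_act g w) (h w)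
  refine ⟨fun w => subset_adjoin k _ ⟨w, rfl⟩, fun σ => (e σ).act,
    fun σ w => Subtype.ext (hmap σ w), fun σ τ hστ => ?_, ?_, fun σ τ => ?_⟩
  · refine AlgEquiv.coe_toAlgHom_injective (algHom_ext_of_eq_adjoin k rfl ?_)
    rintro _ ⟨w, rfl⟩
    exact Subtype.ext <| (hmap σ w).trans <| congrArg ℓ (congrFun hστ w) |>.trans (hmap τ w).symm
  · ext f
    rw [mem_Mset_iff]
    refine ⟨fun ⟨σ, hσ⟩ => ⟨e σ, he σ, hσ⟩, ?_⟩
    rintro ⟨d, hd, rfl⟩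
    obtain ⟨σ, hσ⟩ := exists_algEquiv_map_label_eq h2 hℓ hGE hd
    exact ⟨σ, hinj fun w => (hmap σ w).symm.trans (hσ w)⟩
  · have hτ (w : List Bool) : τ ⟨ℓ w, subset_adjoin k _ ⟨w, rfl⟩⟩ =
        ⟨ℓ ((e τ).act w), subset_adjoin k _ ⟨_, rfl⟩⟩ := Subtype.ext (hmap τ w)
    have hmul : (e (σ * τ)).act = (e σ * e τ).act := hinj fun w => by
      rw [← hmap, AlgEquiv.mul_apply, hτ, hmap, Portrait.act_mul]
    exact hmul.trans (funext (Portrait.act_mul _ _))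

lemma IsGaloisIso.exists_range_eq_Mset {r : ℕ} [Normal k Ω] [Normal k (adjoin k (Set.range ℓ))]
    (h : IsGaloisIso r ℓ (adjoin k (Set.range ℓ))) :
    ∃ Φ : (Ω ≃ₐ[k] Ω) → (List Bool → List Bool), Set.range Φ = Mset r ∧
      (∀ σ w, σ (ℓ w) = ℓ (Φ σ w)) ∧ ∀ σ τ, (∀ w, σ (ℓ w) = τ (ℓ w)) → Φ σ = Φ τ := by
  obtain ⟨hmem, Φ, hΦ, -, hrange, -⟩ := h
  refine ⟨Φ ∘ AlgEquiv.restrictNormalHom _, ?_, fun σ w => ?_, fun σ τ hστ => ?_⟩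
  · rw [(AlgEquiv.restrictNormalHom_surjective Ω).range_comp, hrange]
  · exact (AlgEquiv.restrictNormalHom_apply ..).symm.trans (congrArg Subtype.val (hΦ _ w))
  · exact congrArg Φ (restrictNormalHom_adjoin_eq_iff.2 (Set.forall_mem_range.2 hστ))

lemma IsGaloisIso.finrank_adjoin_labels_eq_card [Normal k Ω] (h2 : (2 : Ω) ≠ 0)
    (hper : (fun z : k => z ^ 2 + c)^[r] 0 = 0)
    (hℓ : IsLabeling (algebraMap k Ω c) (algebraMap k Ω x₀) ℓ)
    (h : IsGaloisIso r ℓ (adjoin k (Set.range ℓ))) (n : ℕ) :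
    Module.finrank k (adjoin k (Set.range fun w : {w : List Bool // w.length ≤ n} => ℓ w)) =
      Nat.card (MsetN r n) := by
  have := hℓ.isGalois_adjoin_range h2
  obtain ⟨Φ, hrange, hΦ, hΦ_eq⟩ := h.exists_range_eq_Mset
  have hLE : GaloisImageLE k r ℓ := fun σ => by
    obtain ⟨e, he, hσ⟩ := (mem_Mset_iff _).1 (hrange ▸ Set.mem_range_self σ)
    exact ⟨e, he, fun w => by rw [hΦ, hσ]⟩
  have hlift {e : Portrait} (he : e ∈ Mgroup r) : ∃ σ, Φ σ = e.act :=
    Set.mem_range.1 (hrange ▸ (mem_Mset_iff _).2 ⟨e, he, rfl⟩)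
  have hGE (n : ℕ) : GaloisImageGE k r ℓ n := fun e he =>
    (hlift he).imp fun σ hσ w _ => by rw [hΦ, hσ]
  refine _root_.finrank_adjoin_labels_eq_card h2 hℓ hLE (hGE n) <|
    label_ne_of_faithful h2 hper hℓ (hGE 2) fun e he hfix => ?_
  obtain ⟨σ, hσ⟩ := hlift he
  obtain ⟨τ, hτ⟩ := hlift (one_mem (Mgroup r))
  have hact : e.act = (1 : Portrait).act := hσ ▸ hτ ▸ hΦ_eq σ τ fun w => by
    rw [hΦ, hΦ, hσ, hτ, hfix, Portrait.act_one]
  simpa [Portrait.act_cons] using congrFun hact [false]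

end InfiniteGalois

section SquareClassCriterion

open IntermediateField

variable {k Ω : Type*} [Field k] [Field Ω] [Algebra k Ω] {c x₀ : k} {ℓ : List Bool → Ω}
  {ζ : ℕ → Ω} {r : ℕ} {D : ℕ → k}

lemma adjoin_singleton_union_eq_of_isPrimitiveRoot {n : ℕ} [NeZero n] {η ξ : Ω}
    (hη : IsPrimitiveRoot η n) (hξ : IsPrimitiveRoot ξ n) (S : Set Ω) :
    adjoin k ({η} ∪ S) = adjoin k ({ξ} ∪ S) := by
  have hle {η ξ : Ω} (hη : IsPrimitiveRoot η n) (hξ : IsPrimitiveRoot ξ n) :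
      adjoin k ({η} ∪ S) ≤ adjoin k ({ξ} ∪ S) := by
    obtain ⟨i, -, rfl⟩ := hξ.eq_pow_of_pow_eq_one hη.pow_eq_one
    have hmem : ξ ∈ adjoin k ({ξ} ∪ S) := subset_adjoin k _ (Set.mem_union_left S rfl)
    rw [adjoin_le_iff]
    rintro x (rfl | hx)
    · exact pow_mem hmem i
    · exact subset_adjoin k _ (Set.mem_union_right _ hx)
  exact (hle hη hξ).antisymm (hle hξ hη)

variable [NeZero r]

lemma IsCoherent.galoisImageLE (h2 : (2 : Ω) ≠ 0)
    (hper : (fun z : Ω => z ^ 2 + algebraMap k Ω c)^[r] 0 = 0)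
    (hℓ : IsLabeling (algebraMap k Ω c) (algebraMap k Ω x₀) ℓ) (hζ : IsTwoPowRootTower ζ)
    (hcoh : IsCoherent r ζ ℓ) : GaloisImageLE k r ℓ := fun σ =>
  (exists_mem_Mgroup_lift hper hℓ hζ hcoh h2 (σ.commutes c) (σ.commutes x₀)).imp
    fun _ h => ⟨h.1, h.2.1⟩

theorem galoisImageGE_of_finrank_adjoin_roots_eq [Normal k Ω] (h2 : (2 : Ω) ≠ 0)
    (hper : (fun z : Ω => z ^ 2 + algebraMap k Ω c)^[r] 0 = 0)
    (hℓ : IsLabeling (algebraMap k Ω c) (algebraMap k Ω x₀) ℓ) (hζ : IsTwoPowRootTower ζ)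
    (hcoh : IsCoherent r ζ ℓ) (hD₁ : D 1 = x₀ - c)
    (hD : ∀ i, 2 ≤ i → i ≤ r → D i = (fun z : k => z ^ 2 + c)^[i] 0 - x₀)
    (h : Module.finrank k (adjoin k ({ζ 2} ∪
      {x : Ω | ∃ i : ℕ, 1 ≤ i ∧ i ≤ r ∧ x ^ 2 = algebraMap k Ω (D i)})) = 2 ^ (r + 2)) :
    (∀ n, GaloisImageGE k r ℓ n) ∧ ∀ w, ℓ w ≠ algebraMap k Ω c := by
  obtain ⟨hσ, hne⟩ := (finrank_adjoin_roots_eq_iff h2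
    (fun i => levelRoot_sq_eq_algebraMap hℓ hD₁ hD i.2) (hζ.isPrimitiveRoot h2 2)).1 h
  exact ⟨galoisImageGE_of_forall_exists h2 hper hℓ hζ hcoh hσ hne,
    label_ne_of_forall_levelRoot_ne_zero hℓ hper fun i hi => hne ⟨i, hi⟩⟩

theorem finrank_adjoin_roots_eq_of_galoisImageGE [Normal k Ω] (h2 : (2 : Ω) ≠ 0)
    (hper : (fun z : Ω => z ^ 2 + algebraMap k Ω c)^[r] 0 = 0)
    (hℓ : IsLabeling (algebraMap k Ω c) (algebraMap k Ω x₀) ℓ) (hζ : IsTwoPowRootTower ζ)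
    (hcoh : IsCoherent r ζ ℓ) (hD₁ : D 1 = x₀ - c)
    (hD : ∀ i, 2 ≤ i → i ≤ r → D i = (fun z : k => z ^ 2 + c)^[i] 0 - x₀)
    (hGE : GaloisImageGE k r ℓ (2 * r + 1)) (hc : ∀ w, ℓ w ≠ algebraMap k Ω c) :
    Module.finrank k (adjoin k ({ζ 2} ∪
      {x : Ω | ∃ i : ℕ, 1 ≤ i ∧ i ≤ r ∧ x ^ 2 = algebraMap k Ω (D i)})) = 2 ^ (r + 2) :=
  (finrank_adjoin_roots_eq_iff h2 (fun i => levelRoot_sq_eq_algebraMap hℓ hD₁ hD i.2)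
    (hζ.isPrimitiveRoot h2 2)).2
    ⟨hGE.exists_map_eq h2 hper hℓ hζ hcoh (hc []), fun i => levelRoot_ne_zero hℓ hc i⟩

lemma galoisImageGE_and_label_ne_of_finrank_eq [Normal k Ω] {n : ℕ} (hn : 2 ≤ n) (h2 : (2 : Ω) ≠ 0)
    (hper : (fun z : k => z ^ 2 + c)^[r] 0 = 0)
    (hℓ : IsLabeling (algebraMap k Ω c) (algebraMap k Ω x₀) ℓ) (hLE : GaloisImageLE k r ℓ)
    (h : Module.finrank k (adjoin k (Set.range fun w : {w : List Bool // w.length ≤ n} => ℓ w)) =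
      Nat.card (MsetN r n)) :
    GaloisImageGE k r ℓ n ∧ ∀ w, ℓ w ≠ algebraMap k Ω c := by
  obtain ⟨hGE, hinj⟩ := (finrank_adjoin_labels_eq_card_iff h2 hℓ hLE).1 h
  refine ⟨hGE, label_ne_of_faithful h2 hper hℓ (hGE.mono hn) fun e he hfix => ?_⟩
  have hagree := hinj e he 1 (one_mem _) fun w _ => by rw [hfix, Portrait.act_one]
  exact hagree.apply_eq (lt_of_lt_of_le Nat.zero_lt_two hn)

end SquareClassCriterion

theorem main_theorem_general {k Ω : Type*} [Field k] [Field Ω] [Algebra k Ω] [IsAlgClosure k Ω]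
    (h2 : (2 : k) ≠ 0) (c x₀ : k) (r : ℕ) [NeZero r]
    (hper : (fun z : k => z ^ 2 + c)^[r] 0 = 0) (D : ℕ → k) (hD₁ : D 1 = x₀ - c)
    (hD : ∀ i : ℕ, 2 ≤ i → i ≤ r → D i = (fun z : k => z ^ 2 + c)^[i] 0 - x₀)
    (F : ℕ → k[X]) (hF₀ : F 0 = X) (hFs : ∀ m : ℕ, F (m + 1) = (X ^ 2 + C c).comp (F m)) :
    [∀ ζ : Ω, IsPrimitiveRoot ζ 8 → Module.finrank k (IntermediateField.adjoin k
        ({ζ} ∪ {x : Ω | ∃ i : ℕ, 1 ≤ i ∧ i ≤ r ∧ x ^ 2 = algebraMap k Ω (D i)})) = 2 ^ (r + 2),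
      Module.finrank k (IntermediateField.adjoin k ((F (2 * r + 1) - C x₀).rootSet Ω)) =
        Nat.card (MsetN r (2 * r + 1)),
      ∀ n : ℕ, 1 ≤ n → Module.finrank k (IntermediateField.adjoin k ((F n - C x₀).rootSet Ω)) =
        Nat.card (MsetN r n),
      ∃ ℓ : List Bool → Ω, IsLabeling (algebraMap k Ω c) (algebraMap k Ω x₀) ℓ ∧
        IsGaloisIso r ℓ (⨆ n : ℕ, IntermediateField.adjoin k ((F n - C x₀).rootSet Ω))].TFAE := by
  have := IsAlgClosure.isAlgClosed (K := Ω) k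
  have hΩ2 : (2 : Ω) ≠ 0 := map_ofNat (algebraMap k Ω) 2 ▸ (_root_.map_ne_zero _).2 h2
  have hperΩ : (fun z : Ω => z ^ 2 + algebraMap k Ω c)^[r] 0 = 0 := by
    simpa [hper] using (algebraMap_iterate (Ω := Ω) c 0 r).symm
  obtain ⟨ζ, hζ⟩ := exists_isTwoPowRootTower (Ω := Ω)
  obtain ⟨ℓ₀, hℓ₀⟩ := exists_isLabeling (algebraMap k Ω c) (algebraMap k Ω x₀)
  obtain ⟨ℓ, hℓ, hcoh⟩ := exists_isCoherent hperΩ hℓ₀ hζ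
  have hLE := hcoh.galoisImageLE hΩ2 hperΩ hℓ hζ
  have hfull := galoisImageGE_of_finrank_adjoin_roots_eq hΩ2 hperΩ hℓ hζ hcoh hD₁ hD
  have hζ2 := hζ.isPrimitiveRoot hΩ2 2
  tfae_have 1 → 3 := fun h n _ => by
    rw [hℓ.adjoin_rootSet_iterate hF₀ hFs]
    exact finrank_adjoin_labels_eq_card hΩ2 hℓ hLE ((hfull (h _ hζ2)).1 n) (hfull (h _ hζ2)).2
  tfae_have 3 → 2 := fun h => h _ (by omega)
  tfae_have 2 → 1 := fun h η hη => by
    rw [hℓ.adjoin_rootSet_iterate hF₀ hFs] at h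
    obtain ⟨hGE, hc⟩ := galoisImageGE_and_label_ne_of_finrank_eq
      (by have := NeZero.pos r; omega) hΩ2 hper hℓ hLE h
    rw [adjoin_singleton_union_eq_of_isPrimitiveRoot hη hζ2]
    exact finrank_adjoin_roots_eq_of_galoisImageGE hΩ2 hperΩ hℓ hζ hcoh hD₁ hD hGE hc
  tfae_have 1 → 4 := fun h => ⟨ℓ, hℓ, by
    rw [hℓ.iSup_adjoin_rootSet_iterate hF₀ hFs]
    exact isGaloisIso_adjoin_range hΩ2 hℓ (hfull (h _ hζ2)).2 hLE (hfull (h _ hζ2)).1⟩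
  tfae_have 4 → 3 := fun ⟨ℓ', hℓ', h⟩ n _ => by
    rw [hℓ'.iSup_adjoin_rootSet_iterate hF₀ hFs] at h
    rw [hℓ'.adjoin_rootSet_iterate hF₀ hFs]
    exact h.finrank_adjoin_labels_eq_card hΩ2 hper hℓ' n
  tfae_finish

/-- **Main Theorem.** Let `k` be a field of characteristic `≠ 2`,
`f(z) = z² + c ∈ k[z]` with `f^r(0) = 0` for a minimal `r ≥ 1`, and `x₀ ∈ k`. Define
`D 1 := x₀ − c`, `D i := f^i(0) − x₀` for `2 ≤ i ≤ r`; let `K_{x₀,n}` be the splitting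
field of `f^n(X) − x₀` over `k` inside an algebraic closure (the field generated by the
roots of `F n − C x₀`, `F n` being the polynomial iterate `f^n`), `K_{x₀,∞}` their union,
and `G_{x₀,∞} = Gal(K_{x₀,∞}/k)`. The following are equivalent:
(1) `[k(ζ_8, √D_1, …, √D_r) : k] = 2^{r+2}` for a primitive `8`-th root of unity `ζ_8`;
(2) `[K_{x₀,2r+1} : k] = |M_{r,2r+1}|`;
(3) `[K_{x₀,n} : k] = |M_{r,n}|` for every `n ≥ 1`;
(4) there is a labeling `ℓ` of the tree of iterated preimages of `x₀` such that the map
sending `σ ∈ G_{x₀,∞}` to the tree automorphism `τ` determined by `σ(ℓ(w)) = ℓ(τ(w))`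
is a group isomorphism from `G_{x₀,∞}` onto `M_{r,∞}`. -/
theorem main_theorem (k : Type*) [Field k] (hchar : ringChar k ≠ 2) (c x₀ : k)
    (r : ℕ) (hr : 1 ≤ r)
    (hper : (fun z : k => z ^ 2 + c)^[r] 0 = 0)
    (hmin : ∀ j : ℕ, 1 ≤ j → j < r → (fun z : k => z ^ 2 + c)^[j] 0 ≠ 0)
    (D : ℕ → k)
    (hD1 : D 1 = x₀ - c)
    (hDi : ∀ i : ℕ, 2 ≤ i → i ≤ r → D i = (fun z : k => z ^ 2 + c)^[i] 0 - x₀)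
    (F : ℕ → Polynomial k)
    (hF0 : F 0 = X)
    (hFs : ∀ m : ℕ, F (m+1) = (X ^ 2 + C c).comp (F m)) :
    [ -- (1)
      (∀ ζ : AlgebraicClosure k, IsPrimitiveRoot ζ 8 →
        Module.finrank k (IntermediateField.adjoin k
          ({ζ} ∪ {x : AlgebraicClosure k | ∃ i : ℕ, 1 ≤ i ∧ i ≤ r ∧
            x ^ 2 = algebraMap k (AlgebraicClosure k) (D i)}) :
          IntermediateField k (AlgebraicClosure k)) = 2 ^ (r + 2)),
      -- (2)
      (Module.finrank k (IntermediateField.adjoin k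
          ((F (2*r+1) - C x₀).rootSet (AlgebraicClosure k)) :
          IntermediateField k (AlgebraicClosure k)) = Nat.card (MsetN r (2*r+1))),
      -- (3)
      (∀ n : ℕ, 1 ≤ n →
        Module.finrank k (IntermediateField.adjoin k
          ((F n - C x₀).rootSet (AlgebraicClosure k)) :
          IntermediateField k (AlgebraicClosure k)) = Nat.card (MsetN r n)),
      -- (4)
      (let Kinf : IntermediateField k (AlgebraicClosure k) :=
        ⨆ n : ℕ, IntermediateField.adjoin k ((F n - C x₀).rootSet (AlgebraicClosure k));
       ∃ ℓ : List Bool → AlgebraicClosure k,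
        ℓ [] = algebraMap k (AlgebraicClosure k) x₀ ∧
        (∀ (w : List Bool) (s : Bool),
          (ℓ (w ++ [s])) ^ 2 + algebraMap k (AlgebraicClosure k) c = ℓ w) ∧
        (∀ w : List Bool, ℓ (w ++ [false]) = - ℓ (w ++ [true])) ∧
        ∃ hmem : ∀ w : List Bool, ℓ w ∈ Kinf,
          ∃ Φ : (Kinf ≃ₐ[k] Kinf) → (List Bool → List Bool),
            (∀ (σ : Kinf ≃ₐ[k] Kinf) (w : List Bool),
              σ ⟨ℓ w, hmem w⟩ = ⟨ℓ (Φ σ w), hmem (Φ σ w)⟩) ∧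
            Function.Injective Φ ∧
            Set.range Φ = Mset r ∧
            (∀ σ τ : Kinf ≃ₐ[k] Kinf, Φ (σ * τ) = Φ σ ∘ Φ τ))
    ].TFAE := by
  have : NeZero r := ⟨by omega⟩
  have h := main_theorem_general (Ω := AlgebraicClosure k) (Ring.two_ne_zero hchar) c x₀ r hper D
    hD1 hDi F hF0 hFs
  simpa only [isLabeling_iff, IsGaloisIso, and_assoc] using h
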